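/- arXiv:2108.11937 — 14 statements merged into one kernel-verified Lean document; each statement's English description precedes it below -/
import Mathlib

section
/- Let f : ℕ → ℂ be a multiplicative function (f(1) = 1 and f(mn) = f(m)f(n) whenever gcd(m,n) = 1). Then the series ∑_{n=1}^∞ |f(n)| converges if and only if the double series ∑_{p prime} ∑_{k=1}^∞ |f(p^k)| converges. -/
open Filter Finset

/-- `f` is a multiplicative arithmetical function: `f 1 = 1` and
`f (m*n) = f m * f n` whenever `gcd m n = 1`. -/
def IsMultFn (f : ℕ → ℂ) : Prop :=
  f 1 = 1 ∧ ∀ m n : ℕ, Nat.Coprime m n → f (m * n) = f m * f n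

/-- The series `∑_{k=0}^∞ g k` converges (in the sense of partial sums) to `L`. -/
def SeriesTendsTo (g : ℕ → ℂ) (L : ℂ) : Prop :=
  Filter.Tendsto (fun N => ∑ k ∈ Finset.range N, g k) Filter.atTop (nhds L)

/-- `f` is an MO function: multiplicative, `∑_{n=1}^∞ f n = 0`, and for each prime `p`
the series `∑_{k=0}^∞ f (p^k)` converges to a nonzero value. -/
def IsMO (f : ℕ → ℂ) : Prop :=
  IsMultFn f ∧ SeriesTendsTo (fun n => f (n + 1)) 0 ∧
    ∀ p : ℕ, p.Prime → ∃ L : ℂ, L ≠ 0 ∧ SeriesTendsTo (fun k => f (p ^ k)) L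

theorem stmt0 (f : ℕ → ℂ) (hf : IsMultFn f) :
    Summable (fun n : ℕ => ‖f (n + 1)‖) ↔
      Summable (fun x : Nat.Primes × ℕ => ‖f ((x.1 : ℕ) ^ (x.2 + 1))‖) := by
  obtain ⟨h1, hmul⟩ := hf
  constructor
  · intro h
    have hinj : Function.Injective
        (fun x : Nat.Primes × ℕ => (x.1 : ℕ) ^ (x.2 + 1) - 1) := by
      intro x y hxy
      apply Nat.Primes.prodNatEquiv.injective
      apply Subtype.ext
      have hx : 0 < (x.1 : ℕ) ^ (x.2 + 1) := pow_pos x.1.2.pos _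
      have hy : 0 < (y.1 : ℕ) ^ (y.2 + 1) := pow_pos y.1.2.pos _
      have hxy' : (x.1 : ℕ) ^ (x.2 + 1) - 1 = (y.1 : ℕ) ^ (y.2 + 1) - 1 := hxy
      have : (x.1 : ℕ) ^ (x.2 + 1) = (y.1 : ℕ) ^ (y.2 + 1) := by omega
      exact this
    refine (h.comp_injective hinj).congr ?_
    intro x
    have hx : 0 < (x.1 : ℕ) ^ (x.2 + 1) := pow_pos x.1.2.pos _
    simp only [Function.comp]
    rw [Nat.sub_add_cancel hx]
  · intro h
    set g : ℕ → ℝ := fun n => ‖f n‖ with hg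
    have hg0 : ∀ n, 0 ≤ g n := fun n => norm_nonneg _
    have hg1 : g 1 = 1 := by simp [hg, h1]
    have hgm : ∀ {m n : ℕ}, Nat.Coprime m n → g (m * n) = g m * g n := by
      intro m n hmn
      simp [hg, hmul m n hmn]
    have hfib : ∀ p : Nat.Primes, Summable (fun k : ℕ => g ((p : ℕ) ^ (k + 1))) :=
      fun p => h.prod_factor p
    have hpw : ∀ p : Nat.Primes, Summable (fun k : ℕ => g ((p : ℕ) ^ k)) :=
      fun p => (summable_nat_add_iff 1).mp (hfib p)
    have hS : Summable (fun p : Nat.Primes => ∑' k : ℕ, g ((p : ℕ) ^ (k + 1))) := h.prod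
    have key : ∀ N : ℕ, ∏ p ∈ N.primesBelow, ∑' n : ℕ, g (p ^ n) ≤
        Real.exp (∑' p : Nat.Primes, ∑' k : ℕ, g ((p : ℕ) ^ (k + 1))) := by
      intro N
      have hb : ∏ p ∈ N.primesBelow, ∑' n : ℕ, g (p ^ n) ≤
          ∏ p ∈ N.primesBelow, Real.exp (∑' k : ℕ, g (p ^ (k + 1))) := by
        apply Finset.prod_le_prod
        · intro p _
          exact tsum_nonneg fun n => hg0 _
        · intro p hp
          rw [(hpw ⟨p, Nat.prime_of_mem_primesBelow hp⟩).tsum_eq_zero_add]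
          simp only [pow_zero, hg1]
          rw [add_comm]
          exact Real.add_one_le_exp _
      refine hb.trans ?_
      rw [← Real.exp_sum]
      apply Real.exp_le_exp.mpr
      have he : ∑ p ∈ N.primesBelow, ∑' k : ℕ, g (p ^ (k + 1)) =
          ∑ p ∈ N.primesBelow.subtype Nat.Prime, ∑' k : ℕ, g ((p : ℕ) ^ (k + 1)) := by
        rw [Finset.sum_subtype_of_mem (fun p => ∑' k : ℕ, g (p ^ (k + 1)))]
        intro p hp
        exact Nat.prime_of_mem_primesBelow hp
      rw [he]
      let t : Finset Nat.Primes := N.primesBelow.subtype Nat.Prime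
      have ht := hS.sum_le_tsum t (fun p _ => tsum_nonneg fun k => hg0 _)
      exact ht
    refine summable_of_sum_range_le (fun n => norm_nonneg _) (fun N => ?_)
      (c := Real.exp (∑' p : Nat.Primes, ∑' k : ℕ, g ((p : ℕ) ^ (k + 1))))
    refine le_trans ?_ (key (N + 1))
    obtain ⟨hs1, hs2⟩ := EulerProduct.summable_and_hasSum_smoothNumbers_prod_primesBelow_tsum
      hg1 hgm (fun {p} hp => (hpw ⟨p, hp⟩).norm) (N + 1)
    have hmem : ∀ i : Fin N, (i : ℕ) + 1 ∈ (N + 1).smoothNumbers := fun i =>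
      Nat.mem_smoothNumbers_of_lt (Nat.succ_pos _) (by omega)
    rw [Finset.sum_range (fun n => ‖f (n + 1)‖)]
    let e : Fin N ↪ (N + 1).smoothNumbers :=
      ⟨fun i => ⟨(i : ℕ) + 1, hmem i⟩, fun i j hij => by
        have := congrArg Subtype.val hij
        apply Fin.ext
        simpa using this⟩
    have := sum_le_hasSum (Finset.univ.map e) (fun i _ => hg0 _) hs2
    rw [Finset.sum_map] at this
    exact this
end

section
/- Let f : ℕ → ℂ be a completely multiplicative function (f(1) = 1 and f(mn) = f(m)f(n) for all m, n) such that the series ∑_{n=1}^∞ f(n) converges to 0. Then for every prime p one has |f(p)| < 1, the series ∑_{k=0}^∞ f(p^k) converges to 1/(1 − f(p)), and this value is nonzero; in particular f is an MO function. -/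
open Filter Finset

theorem stmt1 (f : ℕ → ℂ) (hf1 : f 1 = 1)
    (hfc : ∀ m n : ℕ, f (m * n) = f m * f n)
    (h0 : SeriesTendsTo (fun n => f (n + 1)) 0) :
    (∀ p : ℕ, p.Prime → ‖f p‖ < 1 ∧
      SeriesTendsTo (fun k => f (p ^ k)) (1 / (1 - f p)) ∧ 1 / (1 - f p) ≠ 0) ∧
    IsMO f := by
  have hpow : ∀ p k : ℕ, f (p ^ k) = f p ^ k := by
    intro p k
    induction k with
    | zero => simpa using hf1
    | succ k ih => rw [pow_succ, hfc, ih, pow_succ]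
  have hterm : Tendsto (fun n => f (n + 1)) atTop (nhds 0) := by
    have h1 := (tendsto_add_atTop_iff_nat 1).2 h0
    have h2 := h1.sub h0
    simpa [Finset.sum_range_succ] using h2
  have hf : Tendsto f atTop (nhds 0) := (tendsto_add_atTop_iff_nat 1).1 hterm
  have key : ∀ p : ℕ, p.Prime → ‖f p‖ < 1 ∧
      SeriesTendsTo (fun k => f (p ^ k)) (1 / (1 - f p)) ∧ 1 / (1 - f p) ≠ 0 := by
    intro p hp
    have ht : Tendsto (fun k : ℕ => f p ^ k) atTop (nhds 0) := by
      have := hf.comp (tendsto_pow_atTop_atTop_of_one_lt hp.one_lt)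
      simpa [Function.comp_def, hpow] using this
    have hlt : ‖f p‖ < 1 := tendsto_pow_atTop_nhds_zero_iff_norm_lt_one.1 ht
    refine ⟨hlt, ?_, ?_⟩
    · have := (hasSum_geometric_of_norm_lt_one hlt).tendsto_sum_nat
      simpa [SeriesTendsTo, hpow] using this
    · apply one_div_ne_zero
      intro h
      have h1 : f p = 1 := (sub_eq_zero.1 h).symm
      rw [h1] at hlt
      simp at hlt
  exact ⟨key, ⟨hf1, fun m n _ => hfc m n⟩, h0,
    fun p hp => ⟨_, (key p hp).2.2, (key p hp).2.1⟩⟩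
end

section
/- If f : ℕ → ℂ is an MO function, then the series ∑_{n=1}^∞ |f(n)| diverges. -/
open Filter Finset

theorem stmt2 (f : ℕ → ℂ) (hf : IsMO f) :
    ¬ Summable (fun n : ℕ => ‖f (n + 1)‖) := by
  intro hs
  obtain ⟨⟨h1, hm⟩, h0, hp⟩ := hf
  let g : ℕ → ℂ := fun n => if n = 0 then 0 else f n
  have hgf : ∀ n, n ≠ 0 → g n = f n := fun n hn => by simp [g, hn]
  have hg0 : g 0 = 0 := by simp [g]
  have hg1 : g 1 = 1 := by simp [g, h1]
  have hgm : ∀ {m n : ℕ}, Nat.Coprime m n → g (m * n) = g m * g n := by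
    intro m n hmn
    by_cases hm0 : m = 0
    · simp [hm0, hg0]
    by_cases hn0 : n = 0
    · simp [hn0, hg0]
    rw [hgf _ (Nat.mul_ne_zero hm0 hn0), hgf _ hm0, hgf _ hn0, hm m n hmn]
  have hgs : Summable (fun n => ‖g n‖) := by
    rw [← summable_nat_add_iff 1]
    exact hs.congr (fun n => by rw [hgf _ (Nat.succ_ne_zero n)])
  have hpow : ∀ (p : Nat.Primes) (k : ℕ), g ((p : ℕ) ^ k) = f ((p : ℕ) ^ k) := fun p k =>
    hgf _ (pow_ne_zero _ p.2.ne_zero)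
  have hps : ∀ p : Nat.Primes, Summable (fun k : ℕ => ‖g ((p : ℕ) ^ k)‖) := fun p =>
    hgs.comp_injective (Nat.pow_right_injective p.2.two_le)
  have hsum0 : ∑' n, g n = 0 := by
    rw [hgs.of_norm.tsum_eq_zero_add, hg0, zero_add]
    have h2 : Summable (fun n => g (n + 1)) := (summable_nat_add_iff 1).2 hgs.of_norm
    refine tendsto_nhds_unique h2.hasSum.tendsto_sum_nat ?_
    refine h0.congr (fun N => Finset.sum_congr rfl fun k _ => ?_)
    exact (hgf _ (Nat.succ_ne_zero k)).symm
  have hL : ∀ p : Nat.Primes, ∑' k : ℕ, g ((p : ℕ) ^ k) ≠ 0 := by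
    intro p
    obtain ⟨L, hL0, hL⟩ := hp p p.2
    have : ∑' k : ℕ, g ((p : ℕ) ^ k) = L := by
      refine tendsto_nhds_unique (hps p).of_norm.hasSum.tendsto_sum_nat ?_
      exact hL.congr (fun N => Finset.sum_congr rfl fun k _ => (hpow p k).symm)
    rwa [this]
  have heq : ∀ p : Nat.Primes,
      ∑' k : ℕ, g ((p : ℕ) ^ k) = 1 + ∑' k : ℕ, g ((p : ℕ) ^ (k + 1)) := by
    intro p
    rw [(hps p).of_norm.tsum_eq_zero_add, pow_zero, hg1]
  have hdouble : Summable (fun q : Nat.Primes × ℕ => ‖g ((q.1 : ℕ) ^ (q.2 + 1))‖) :=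
    hgs.comp_injective
      (Subtype.val_injective.comp Nat.Primes.prodNatEquiv.injective)
  have hs1 : Summable (fun p : Nat.Primes => ‖∑' k : ℕ, g ((p : ℕ) ^ (k + 1))‖) := by
    refine Summable.of_nonneg_of_le (fun _ => norm_nonneg _) (fun p => ?_) hdouble.prod
    exact norm_tsum_le_tsum_norm (hdouble.prod_factor p)
  have hne : ∏' p : Nat.Primes, (1 + ∑' k : ℕ, g ((p : ℕ) ^ (k + 1))) ≠ 0 :=
    tprod_one_add_ne_zero_of_summable (fun p => by rw [← heq p]; exact hL p) hs1
  apply hne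
  rw [← hsum0, ← EulerProduct.eulerProduct_tprod hg1 hgm hgs hg0]
  exact tprod_congr (fun p => (heq p).symm)
end

section
/- If f : ℕ → ℂ is an MO function, then the double series ∑_{p prime} ∑_{k=1}^∞ |f(p^k)| diverges. -/
open Filter Finset

theorem stmt3 (f : ℕ → ℂ) (hf : IsMO f) :
    ¬ Summable (fun x : Nat.Primes × ℕ => ‖f ((x.1 : ℕ) ^ (x.2 + 1))‖) := by
  intro hS
  obtain ⟨⟨hf1, hfm⟩, hf0, hfp⟩ := hf
  set g : ℕ → ℂ := fun n => if n = 0 then 0 else f n with hg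
  have gf : ∀ n, n ≠ 0 → g n = f n := fun n hn => by simp [hg, hn]
  have g0 : g 0 = 0 := by simp [hg]
  have g1 : g 1 = 1 := by simp [hg, hf1]
  have gp : ∀ p : ℕ, p.Prime → ∀ k, g (p ^ k) = f (p ^ k) :=
    fun p hp k => gf _ (pow_ne_zero _ hp.ne_zero)
  have gm : ∀ {m n : ℕ}, Nat.Coprime m n → g (m * n) = g m * g n := by
    intro m n h
    by_cases hm : m = 0
    · simp [hm, g0]
    by_cases hn : n = 0
    · simp [hn, g0]
    rw [gf _ (mul_ne_zero hm hn), gf _ hm, gf _ hn, hfm m n h]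
  have hS' : Summable (fun x : Nat.Primes × ℕ => ‖g ((x.1 : ℕ) ^ (x.2 + 1))‖) := by
    refine hS.congr fun x => ?_
    rw [gp _ x.1.2]
  have hrow1 : ∀ p : Nat.Primes, Summable (fun k : ℕ => ‖g ((p : ℕ) ^ (k + 1))‖) :=
    fun p => hS'.prod_factor p
  have hrow : ∀ {p : ℕ}, p.Prime → Summable (fun k : ℕ => ‖g (p ^ k)‖) := fun {p} hp =>
    (summable_nat_add_iff 1).mp (hrow1 ⟨p, hp⟩)
  have hcol : Summable (fun p : Nat.Primes => ∑' k : ℕ, ‖g ((p : ℕ) ^ (k + 1))‖) := hS'.prod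
  set A : ℕ → ℝ := Set.indicator {p | Nat.Prime p} (fun p => ∑' k : ℕ, ‖g (p ^ (k + 1))‖) with hA
  have hAs : Summable A := summable_subtype_iff_indicator.mp hcol
  have hA0 : ∀ n, 0 ≤ A n := fun n =>
    Set.indicator_nonneg (fun p _ => tsum_nonneg fun k => norm_nonneg _) n
  have hsum : Summable (fun n => ‖g n‖) := by
    refine summable_of_sum_le (c := Real.exp (∑' n, A n)) (fun n => norm_nonneg _) fun u => ?_
    obtain ⟨N, hN⟩ := u.exists_nat_subset_range
    have key := EulerProduct.summable_and_hasSum_smoothNumbers_prod_primesBelow_tsum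
      (f := fun n => ‖g n‖) (by simp [g1]) (fun {m n} h => by simp [gm h])
      (fun hp => by simpa using hrow hp) N
    have h1 : Summable (Set.indicator N.smoothNumbers fun n => ‖g n‖) :=
      summable_subtype_iff_indicator.mp key.2.summable
    calc ∑ x ∈ u, ‖g x‖ ≤ ∑ x ∈ u, Set.indicator N.smoothNumbers (fun n => ‖g n‖) x := by
          refine Finset.sum_le_sum fun x hx => ?_
          rcases Nat.eq_zero_or_pos x with h | h
          · rw [h, g0, norm_zero]
            exact Set.indicator_nonneg (fun _ _ => norm_nonneg _) _
          · rw [Set.indicator_of_mem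
              (Nat.mem_smoothNumbers_of_lt h (Finset.mem_range.mp (hN hx)))]
      _ ≤ ∑' x, Set.indicator N.smoothNumbers (fun n => ‖g n‖) x :=
          h1.sum_le_tsum _ fun _ _ => Set.indicator_nonneg (fun _ _ => norm_nonneg _) _
      _ = ∏ p ∈ N.primesBelow, ∑' n : ℕ, ‖g (p ^ n)‖ := by
          rw [← _root_.tsum_subtype]; exact key.2.tsum_eq
      _ = ∏ p ∈ N.primesBelow, (1 + A p) := by
          refine Finset.prod_congr rfl fun p hp => ?_
          have hp' := Nat.prime_of_mem_primesBelow hp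
          rw [(hrow hp').tsum_eq_zero_add, hA, Set.indicator_of_mem (by exact hp')]
          simp [g1]
      _ ≤ Real.exp (∑ p ∈ N.primesBelow, A p) := Real.prod_one_add_le_exp_sum _ hA0
      _ ≤ Real.exp (∑' n, A n) := Real.exp_le_exp.mpr (hAs.sum_le_tsum _ fun _ _ => hA0 _)
  have hprod := EulerProduct.eulerProduct_tprod g1 gm hsum g0
  have hz : ∑' n, g n = 0 := by
    rw [hsum.of_norm.tsum_eq_zero_add, g0, zero_add]
    have h2 := ((summable_nat_add_iff 1).mpr hsum.of_norm).hasSum.tendsto_sum_nat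
    refine tendsto_nhds_unique h2 (hf0.congr fun N => ?_)
    exact Finset.sum_congr rfl fun k _ => (gf _ (Nat.succ_ne_zero k)).symm
  rw [hz] at hprod
  have hrw : ∀ p : Nat.Primes, ∑' e : ℕ, g ((p : ℕ) ^ e) = 1 + ∑' e : ℕ, g ((p : ℕ) ^ (e + 1)) := by
    intro p
    rw [(hrow p.2).of_norm.tsum_eq_zero_add, pow_zero, g1]
  have hne : ∏' p : Nat.Primes, (1 + ∑' e : ℕ, g ((p : ℕ) ^ (e + 1))) ≠ 0 := by
    refine tprod_one_add_ne_zero_of_summable (fun p => ?_) ?_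
    · rw [← hrw]
      obtain ⟨L, hL, hT⟩ := hfp p p.2
      have h3 := (hrow p.2).of_norm.hasSum.tendsto_sum_nat
      have : ∑' e : ℕ, g ((p : ℕ) ^ e) = L :=
        tendsto_nhds_unique h3 (hT.congr fun N =>
          Finset.sum_congr rfl fun k _ => (gp _ p.2 k).symm)
      rwa [this]
    · exact Summable.of_nonneg_of_le (fun _ => norm_nonneg _)
        (fun p => norm_tsum_le_tsum_norm (hrow1 p)) hcol
  exact hne (by simpa only [hrw] using hprod)
end

section
/- If f : ℕ → ℂ is an MO function, then the partial sums satisfy ∑_{n ≤ x} f(n) = Ω(1/(x log x)); that is, it is NOT the case that there exists a constant C such that |∑_{n ≤ x} f(n)| ≤ C/(x log x) for all sufficiently large x. -/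
open Filter Finset

lemma mo_block (j : ℕ) (hj : 1 ≤ j) :
    ∑ n ∈ Finset.Ico (2 ^ j) (2 ^ (j + 1)),
      Set.indicator {p : ℕ | p.Prime} (fun n : ℕ => 1 / ((n : ℝ) * Real.log n)) n
      ≤ (4 / Real.log 2) * (1 / (j : ℝ) ^ 2) := by
  have hl2 : 0 < Real.log 2 := Real.log_pos (by norm_num)
  have hj' : (0 : ℝ) < j := by exact_mod_cast hj
  set D : ℝ := 2 ^ j * (j * Real.log 2) ^ 2 with hD
  have hDpos : 0 < D := by positivity
  have h1 : ∀ n ∈ Finset.Ico (2 ^ j) (2 ^ (j + 1)),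
      Set.indicator {p : ℕ | p.Prime} (fun n : ℕ => 1 / ((n : ℝ) * Real.log n)) n
      ≤ (if n.Prime then Real.log n else 0) / D := by
    intro n hn
    by_cases hp : n.Prime
    · rw [Set.indicator_of_mem (by exact hp), if_pos hp]
      have hn1 : ((2 : ℝ) ^ j) ≤ n := by exact_mod_cast (Finset.mem_Ico.1 hn).1
      have hlog : j * Real.log 2 ≤ Real.log n := by
        rw [← Real.log_pow]
        exact Real.log_le_log (by positivity) hn1
      have hlp : 0 < Real.log n := lt_of_lt_of_le (by positivity) hlog
      have hnp : (0 : ℝ) < n := lt_of_lt_of_le (by positivity) hn1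
      rw [div_le_div_iff₀ (by positivity) hDpos, one_mul]
      calc D ≤ n * (Real.log n) ^ 2 := by rw [hD]; gcongr
        _ = _ := by ring
    · rw [Set.indicator_of_notMem (by exact hp), if_neg hp]; simp
  have h2 : ∑ n ∈ Finset.Ico (2 ^ j : ℕ) (2 ^ (j + 1)), (if n.Prime then Real.log (n : ℝ) else 0)
      ≤ Real.log 4 * 2 ^ (j + 1) := by
    have h3 := Chebyshev.theta_le_log4_mul_x (x := 2 ^ (j + 1)) (by positivity)
    refine le_trans ?_ h3
    rw [Chebyshev.theta, ← Finset.sum_filter]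
    apply Finset.sum_le_sum_of_subset_of_nonneg
    · intro n hn
      simp only [Finset.mem_filter, Finset.mem_Ico, Finset.mem_Ioc] at hn ⊢
      refine ⟨⟨hn.2.pos, ?_⟩, hn.2⟩
      apply Nat.le_floor
      exact_mod_cast hn.1.2.le
    · intro n _ _
      exact Real.log_natCast_nonneg n
  calc _ ≤ _ := Finset.sum_le_sum h1
    _ = (∑ n ∈ Finset.Ico (2 ^ j : ℕ) (2 ^ (j + 1)), (if n.Prime then Real.log n else 0)) / D := by
      rw [Finset.sum_div]
    _ ≤ (Real.log 4 * 2 ^ (j + 1)) / D := by gcongr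
    _ = _ := by
      have : Real.log 4 = 2 * Real.log 2 := by
        rw [show (4 : ℝ) = 2 ^ 2 by norm_num, Real.log_pow]; norm_num
      rw [this, hD]
      field_simp
      ring

lemma mo_summable_primes :
    Summable (fun p : Nat.Primes => 1 / ((p : ℝ) * Real.log (p : ℕ))) := by
  have key : Summable (Set.indicator {p : ℕ | p.Prime}
      (fun n : ℕ => 1 / ((n : ℝ) * Real.log n))) := by
    have hnn : ∀ n, 0 ≤ Set.indicator {p : ℕ | p.Prime}
      (fun n : ℕ => 1 / ((n : ℝ) * Real.log n)) n := by
      intro n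
      apply Set.indicator_nonneg
      intro m _
      have := Real.log_natCast_nonneg m
      positivity
    have hs : Summable (fun j : ℕ => (4 / Real.log 2) * (1 / (j : ℝ) ^ 2)) :=
      (Real.summable_one_div_nat_pow.2 (by norm_num)).mul_left _
    have hl2 : 0 < Real.log 2 := Real.log_pos (by norm_num)
    have hind : ∀ J : ℕ, ∑ n ∈ Finset.range (2 ^ J), Set.indicator {p : ℕ | p.Prime}
      (fun n : ℕ => 1 / ((n : ℝ) * Real.log n)) n ≤
        ∑ j ∈ Finset.range J, (4 / Real.log 2) * (1 / (j : ℝ) ^ 2) := by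
      intro J
      induction J with
      | zero => simp [Set.indicator, Nat.not_prime_zero]
      | succ J ih =>
        rw [Finset.sum_range_succ, ← Finset.sum_range_add_sum_Ico _
          (show 2 ^ J ≤ 2 ^ (J + 1) from Nat.pow_le_pow_right (by norm_num) (by omega))]
        refine add_le_add ih ?_
        rcases Nat.eq_zero_or_pos J with h | h
        · subst h
          simp [Nat.not_prime_one]
        · exact mo_block J h
    refine summable_of_sum_range_le (c := ∑' j : ℕ, (4 / Real.log 2) * (1 / (j : ℝ) ^ 2)) hnn ?_
    intro n
    calc _ ≤ _ := Finset.sum_le_sum_of_subset_of_nonneg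
            (Finset.range_subset_range.2 (Nat.lt_two_pow_self (n := n)).le) (fun i _ _ => hnn i)
      _ ≤ _ := hind n
      _ ≤ _ := hs.sum_le_tsum _ (fun i _ => by positivity)
  exact summable_subtype_iff_indicator.2 key

lemma mo_bound (f : ℕ → ℂ) (C : ℝ) (h : ∀ᶠ x : ℝ in Filter.atTop,
      ‖∑ n ∈ Finset.Icc 1 ⌊x⌋₊, f n‖ ≤ C / (x * Real.log x)) :
    ∃ K : ℝ, 0 ≤ K ∧ ∀ n : ℕ, 2 ≤ n → ‖f n‖ ≤ K * (1 / (n * Real.log n)) := by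
  obtain ⟨X, hX⟩ := Filter.eventually_atTop.1 h
  have hbig : ∀ᶠ n : ℕ in atTop, ‖f (n + 2)‖ ≤
      (5 * |C|) * ‖(1 / (((n + 2 : ℕ) : ℝ) * Real.log ((n + 2 : ℕ) : ℝ)))‖ := by
    filter_upwards [Filter.eventually_ge_atTop (max 5 ⌈X⌉₊)] with n hn
    have hn5 : 5 ≤ n := le_trans (le_max_left _ _) hn
    have hnX : X ≤ n := Nat.ceil_le.1 (le_trans (le_max_right _ _) hn)
    have hn5' : (5 : ℝ) ≤ n := by exact_mod_cast hn5
    have e1 := hX ((n + 2 : ℕ) : ℝ) (by push_cast; linarith)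
    have e2 := hX ((n + 1 : ℕ) : ℝ) (by push_cast; linarith)
    rw [Nat.floor_natCast] at e1 e2
    have hf : f (n + 2) = ∑ k ∈ Finset.Icc 1 (n + 2), f k - ∑ k ∈ Finset.Icc 1 (n + 1), f k := by
      rw [show n + 2 = (n + 1) + 1 by rfl, Finset.sum_Icc_succ_top (by omega)]; ring
    set y : ℝ := ((n + 2 : ℕ) : ℝ) with hy
    set z : ℝ := ((n + 1 : ℕ) : ℝ) with hz
    have hzy : z = y - 1 := by rw [hy, hz]; push_cast; ring
    have hy5 : 5 ≤ y := by rw [hy]; push_cast; linarith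
    have hly : 0 < Real.log y := Real.log_pos (by linarith)
    have hlz : Real.log y ≤ 2 * Real.log z := by
      rw [show 2 * Real.log z = Real.log (z ^ 2) by rw [Real.log_pow]; norm_num]
      apply Real.log_le_log (by linarith)
      rw [hzy]; nlinarith
    have h1 : C / (y * Real.log y) ≤ |C| * (1 / (y * Real.log y)) := by
      rw [div_eq_mul_one_div]
      exact mul_le_mul_of_nonneg_right (le_abs_self C) (by positivity)
    have hzp : 0 < z := by linarith
    have hlzp : 0 < Real.log z := by linarith
    have h2 : C / (z * Real.log z) ≤ (4 * |C|) * (1 / (y * Real.log y)) := by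
      have h3 : 1 / (z * Real.log z) ≤ 4 * (1 / (y * Real.log y)) := by
        rw [mul_one_div, div_le_div_iff₀ (by positivity) (by positivity)]
        have : y * Real.log y ≤ (2 * z) * (2 * Real.log z) := by
          apply mul_le_mul (by linarith) hlz hly.le (by linarith)
        linarith
      calc C / (z * Real.log z) = C * (1 / (z * Real.log z)) := div_eq_mul_one_div _ _
        _ ≤ |C| * (1 / (z * Real.log z)) :=
          mul_le_mul_of_nonneg_right (le_abs_self C) (by positivity)
        _ ≤ |C| * (4 * (1 / (y * Real.log y))) :=
          mul_le_mul_of_nonneg_left h3 (abs_nonneg _)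
        _ = _ := by ring
    rw [Real.norm_of_nonneg (by positivity), hf]
    refine (norm_sub_le _ _).trans ?_
    linarith
  have hO := Asymptotics.IsBigO.of_bound _ hbig
  rw [Asymptotics.isBigO_nat_atTop_iff] at hO
  · obtain ⟨K, hK⟩ := hO
    refine ⟨|K|, abs_nonneg _, fun n hn => ?_⟩
    obtain ⟨m, rfl⟩ := Nat.exists_eq_add_of_le' hn
    refine (hK m).trans ?_
    have hl := Real.log_natCast_nonneg (m + 2)
    rw [Real.norm_of_nonneg (by positivity)]
    exact mul_le_mul_of_nonneg_right (le_abs_self K) (by positivity)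
  · intro n hn
    exfalso
    have : 0 < Real.log ((n + 2 : ℕ) : ℝ) := Real.log_pos (by push_cast; linarith [n.cast_nonneg (α := ℝ)])
    have h3 : (0 : ℝ) < ((n + 2 : ℕ) : ℝ) := by positivity
    exact (one_div_pos.2 (mul_pos h3 this)).ne' hn

theorem stmt4 (f : ℕ → ℂ) (hf : IsMO f) :
    ¬ ∃ C : ℝ, ∀ᶠ x : ℝ in Filter.atTop,
      ‖∑ n ∈ Finset.Icc 1 ⌊x⌋₊, f n‖ ≤ C / (x * Real.log x) := by
  rintro ⟨C, hC⟩
  obtain ⟨K, hK0, hK⟩ := mo_bound f C hC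
  obtain ⟨⟨hf1, hmul⟩, hzero, hprime⟩ := hf
  set F : ℕ → ℂ := fun n => if n = 0 then 0 else f n with hF
  have hFf : ∀ n, n ≠ 0 → F n = f n := fun n hn => by simp [hF, hn]
  have hF0 : F 0 = 0 := by simp [hF]
  have hF1 : F 1 = 1 := by rw [hFf 1 one_ne_zero, hf1]
  have hFmul : ∀ {m n : ℕ}, Nat.Coprime m n → F (m * n) = F m * F n := by
    intro m n hmn
    by_cases hm : m = 0
    · simp [hm, hF0]
    by_cases hn : n = 0
    · simp [hn, hF0]
    rw [hFf m hm, hFf n hn, hFf _ (mul_ne_zero hm hn), hmul m n hmn]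
  set b : ℕ → ℝ := fun p => K * (1 / ((p : ℝ) * Real.log p)) with hb
  have hbnn : ∀ p, 0 ≤ b p := fun p => by
    have := Real.log_natCast_nonneg p
    simp only [hb]; positivity
  have hbs : Summable (fun p : Nat.Primes => b p) := mo_summable_primes.mul_left K
  have hpk : ∀ p : ℕ, p.Prime → ∀ k : ℕ, ‖F (p ^ (k + 1))‖ ≤ b p * (1 / 2) ^ k := by
    intro p hp k
    rw [hFf _ (pow_ne_zero _ hp.ne_zero)]
    have hp2 : (2 : ℝ) ≤ p := by exact_mod_cast hp.two_le
    have hlp : 0 < Real.log p := Real.log_pos (by linarith)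
    have hge : 2 ≤ p ^ (k + 1) := hp.two_le.trans (Nat.le_self_pow (by omega) p)
    refine (hK _ hge).trans ?_
    simp only [hb]
    rw [mul_assoc]
    refine mul_le_mul_of_nonneg_left ?_ hK0
    rw [one_div_pow, one_div_mul_one_div]
    apply one_div_le_one_div_of_le (by positivity)
    push_cast
    rw [Real.log_pow, pow_succ]
    have a1 : (2 : ℝ) ^ k ≤ (p : ℝ) ^ k := by gcongr
    have a2 : Real.log p ≤ ((k + 1 : ℕ) : ℝ) * Real.log p := by
      apply le_mul_of_one_le_left hlp.le
      push_cast; linarith [k.cast_nonneg (α := ℝ)]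
    calc (p : ℝ) * Real.log p * 2 ^ k = (2 ^ k * p) * Real.log p := by ring
      _ ≤ _ := by gcongr
  have hgeo : Summable (fun k : ℕ => ((1 : ℝ) / 2) ^ k) := summable_geometric_two
  have hps1 : ∀ p : ℕ, p.Prime → Summable (fun k : ℕ => ‖F (p ^ (k + 1))‖) := fun p hp =>
    Summable.of_nonneg_of_le (fun _ => norm_nonneg _) (hpk p hp) (hgeo.mul_left _)
  have hps : ∀ {p : ℕ}, p.Prime → Summable (fun k : ℕ => ‖F (p ^ k)‖) := fun {p} hp =>
    (summable_nat_add_iff (f := fun k : ℕ => ‖F (p ^ k)‖) 1).1 (hps1 p hp)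
  have hpt : ∀ p : ℕ, p.Prime → ∑' k : ℕ, ‖F (p ^ (k + 1))‖ ≤ 2 * b p := by
    intro p hp
    calc _ ≤ ∑' k : ℕ, b p * (1 / 2) ^ k :=
          (hps1 p hp).tsum_le_tsum (hpk p hp) (hgeo.mul_left _)
      _ = 2 * b p := by rw [tsum_mul_left, tsum_geometric_two]; ring
  -- absolute summability
  have habs : Summable (fun n => ‖F n‖) := by
    refine summable_of_sum_range_le (c := Real.exp (∑' p : Nat.Primes, 2 * b p))
      (fun _ => norm_nonneg _) ?_
    intro N
    obtain ⟨-, hsm⟩ := EulerProduct.summable_and_hasSum_smoothNumbers_prod_primesBelow_tsum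
      (f := fun n => ‖F n‖) (by simp [hF1])
      (fun {m n} h => by simp only [hFmul h, norm_mul]) (fun {p} hp => by simpa using hps hp) N
    have hsm' := (hasSum_subtype_iff_indicator (f := fun n => ‖F n‖)
      (s := (N.smoothNumbers : Set ℕ))).1 hsm
    have hle1 : ∑ n ∈ Finset.range N, ‖F n‖ ≤ ∏ p ∈ N.primesBelow, ∑' k : ℕ, ‖F (p ^ k)‖ := by
      refine le_trans (Finset.sum_le_sum ?_) (sum_le_hasSum (Finset.range N)
        (fun i _ => Set.indicator_nonneg (fun _ _ => norm_nonneg _) i) hsm')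
      intro n hn
      by_cases h0 : n = 0
      · subst h0
        rw [hF0, norm_zero]
        exact Set.indicator_nonneg (fun _ _ => norm_nonneg _) _
      · rw [Set.indicator_of_mem]
        exact Nat.mem_smoothNumbers_of_lt (Nat.pos_of_ne_zero h0) (Finset.mem_range.1 hn)
    refine hle1.trans ?_
    have hle2 : ∏ p ∈ N.primesBelow, ∑' k : ℕ, ‖F (p ^ k)‖
        ≤ ∏ p ∈ N.primesBelow, Real.exp (2 * b p) := by
      refine Finset.prod_le_prod (fun p _ => tsum_nonneg fun _ => norm_nonneg _) ?_
      intro p hp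
      have hp' := Nat.prime_of_mem_primesBelow hp
      rw [(hps hp').tsum_eq_zero_add, pow_zero, hF1, norm_one]
      have := Real.add_one_le_exp (2 * b p)
      linarith [hpt p hp']
    refine hle2.trans ?_
    rw [← Real.exp_sum, Real.exp_le_exp]
    have hbs2 : Summable (fun p : Nat.Primes => 2 * b p) := hbs.mul_left 2
    have hbs3 := (hasSum_subtype_iff_indicator (f := fun n : ℕ => 2 * b n)
      (s := {p : ℕ | p.Prime})).1 hbs2.hasSum
    refine le_trans (Finset.sum_le_sum ?_) (sum_le_hasSum N.primesBelow
      (fun i _ => Set.indicator_nonneg (fun _ _ => mul_nonneg zero_le_two (hbnn _)) i) hbs3)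
    intro p hp
    rw [Set.indicator_of_mem (show p ∈ {p : ℕ | p.Prime} from Nat.prime_of_mem_primesBelow hp)]
  have hFs : Summable F := habs.of_norm
  -- the total sum is zero
  have htot : ∑' n, F n = 0 := by
    rw [hFs.tsum_eq_zero_add, hF0, zero_add]
    have h1 := ((summable_nat_add_iff 1).2 hFs).hasSum.tendsto_sum_nat
    refine tendsto_nhds_unique h1 ?_
    refine hzero.congr fun N => Finset.sum_congr rfl fun k _ => ?_
    rw [hFf _ (Nat.succ_ne_zero k)]
  have hprod := EulerProduct.eulerProduct_tprod hF1 hFmul habs hF0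
  rw [htot] at hprod
  have hsplit : ∀ p : Nat.Primes, ∑' e, F ((p : ℕ) ^ e) = 1 + ∑' e, F ((p : ℕ) ^ (e + 1)) := by
    intro p
    rw [((hps p.2).of_norm).tsum_eq_zero_add, pow_zero, hF1]
  simp_rw [hsplit] at hprod
  refine tprod_one_add_ne_zero_of_summable ?_ ?_ hprod
  · intro p
    rw [← hsplit]
    obtain ⟨L, hL, hLt⟩ := hprime p p.2
    have h1 := ((hps p.2).of_norm).hasSum.tendsto_sum_nat
    have h2 : ∑' e, F ((p : ℕ) ^ e) = L := by
      refine tendsto_nhds_unique h1 ?_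
      refine hLt.congr fun N => Finset.sum_congr rfl fun k _ => ?_
      rw [hFf _ (pow_ne_zero _ p.2.ne_zero)]
    rw [h2]; exact hL
  · refine Summable.of_nonneg_of_le (fun _ => norm_nonneg _) ?_ (hbs.mul_left 2)
    intro p
    exact (norm_tsum_le_tsum_norm (hps1 p p.2)).trans (hpt p p.2)
end

section
/- If f : ℕ → ℂ is an MO function, then for every ε > 0 the partial sums satisfy ∑_{n ≤ x} f(n) = Ω(1/(x (log x)^ε)); that is, for each ε > 0 it is NOT the case that there exists a constant C such that |∑_{n ≤ x} f(n)| ≤ C/(x (log x)^ε) for all sufficiently large x. -/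
open Filter Finset

noncomputable def hh (ε : ℝ) (n : ℕ) : ℝ := 1 / ((n:ℝ) * Real.log n ^ ε)

lemma hh_nonneg (ε : ℝ) (n : ℕ) : 0 ≤ hh ε n := by
  unfold hh
  have : 0 ≤ Real.log n := Real.log_natCast_nonneg n
  positivity

lemma hh_pos (ε : ℝ) (n : ℕ) (hn : 2 ≤ n) : 0 < hh ε n := by
  unfold hh
  have : 0 < Real.log n := Real.log_pos (by exact_mod_cast hn)
  have : (0:ℝ) < n := by positivity
  positivity

lemma block (ε : ℝ) (hε : 0 < ε) (k : ℕ) :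
    ∑ n ∈ Finset.Ico (2^k) (2^(k+1)), (if n.Prime then hh ε n else 0) ≤
      (2 * Real.log 4 / Real.log 2 ^ (1+ε)) * (1 / (k:ℝ) ^ (1+ε)) := by
  rcases Nat.eq_zero_or_pos k with rfl | hk
  · have : Finset.Ico (2^0) (2^(0+1)) = {1} := by decide
    rw [this]
    simp [Nat.not_prime_one, Real.zero_rpow (show (1+ε) ≠ 0 by positivity)]
  have hl2 : 0 < Real.log 2 := Real.log_pos (by norm_num)
  have hk' : (0:ℝ) < k := by exact_mod_cast hk
  set B : ℝ := 2^k * ((k:ℝ) * Real.log 2) ^ (1+ε) with hB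
  have hBpos : 0 < B := by positivity
  calc ∑ n ∈ Finset.Ico (2^k) (2^(k+1)), (if n.Prime then hh ε n else 0)
      ≤ ∑ n ∈ Finset.Ico (2^k) (2^(k+1)), (if n.Prime then Real.log n / B else 0) := by
        apply Finset.sum_le_sum
        intro n hn
        rw [Finset.mem_Ico] at hn
        split_ifs with hp
        · have h1 : (2:ℝ)^k ≤ n := by exact_mod_cast hn.1
          have h2 : (k:ℝ) * Real.log 2 ≤ Real.log n := by
            rw [← Real.log_pow]
            exact Real.log_le_log (by positivity) h1
          have h3 : 0 < Real.log n := lt_of_lt_of_le (by positivity) h2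
          have h4 : hh ε n = Real.log n / (n * Real.log n ^ (1+ε)) := by
            unfold hh
            rw [Real.rpow_add h3, Real.rpow_one]
            have : (0:ℝ) < n := lt_of_lt_of_le (by positivity) h1
            have : 0 < Real.log n ^ ε := by positivity
            field_simp
          rw [h4, hB]
          gcongr
        · exact le_rfl
    _ = (∑ n ∈ (Finset.Ico (2^k) (2^(k+1))).filter Nat.Prime, Real.log n) / B := by
        rw [← Finset.sum_filter, Finset.sum_div]
    _ ≤ Chebyshev.theta ((2^(k+1) : ℕ) : ℝ) / B := by
        gcongr
        rw [Chebyshev.theta_eq_sum_Icc, Nat.floor_natCast]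
        apply Finset.sum_le_sum_of_subset_of_nonneg
        · intro n hn
          simp only [Finset.mem_filter, Finset.mem_Ico, Finset.mem_Icc] at hn ⊢
          exact ⟨⟨Nat.zero_le _, hn.1.2.le⟩, hn.2⟩
        · intro n _ _
          exact Real.log_natCast_nonneg n
    _ ≤ (Real.log 4 * ((2^(k+1) : ℕ) : ℝ)) / B := by
        gcongr
        exact Chebyshev.theta_le_log4_mul_x (by positivity)
    _ = _ := by
        rw [hB, Real.mul_rpow hk'.le hl2.le]
        have : (0:ℝ) < (k:ℝ) ^ (1+ε) := by positivity
        have : (0:ℝ) < Real.log 2 ^ (1+ε) := by positivity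
        push_cast
        field_simp
        ring

lemma summable_primes (ε : ℝ) (hε : 0 < ε) :
    Summable (fun n : ℕ => if n.Prime then hh ε n else 0) := by
  have hs : Summable (fun k : ℕ => (2 * Real.log 4 / Real.log 2 ^ (1+ε)) * (1 / (k:ℝ) ^ (1+ε))) :=
    (Real.summable_one_div_nat_rpow.mpr (by linarith)).mul_left _
  have hnn : ∀ n : ℕ, 0 ≤ (if n.Prime then hh ε n else 0) := by
    intro n; split_ifs
    · exact hh_nonneg ε n
    · exact le_rfl
  have hl2 : 0 < Real.log 2 := Real.log_pos (by norm_num)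
  have key : ∀ K : ℕ, ∑ n ∈ Finset.range (2^K), (if n.Prime then hh ε n else 0) ≤
      ∑ k ∈ Finset.range K, (2 * Real.log 4 / Real.log 2 ^ (1+ε)) * (1 / (k:ℝ) ^ (1+ε)) := by
    intro K
    induction K with
    | zero => simp [Nat.not_prime_zero]
    | succ K ih =>
      rw [Finset.sum_range_succ, ← Finset.sum_range_add_sum_Ico _ (Nat.pow_le_pow_right (by norm_num : 0 < 2) (Nat.le_succ K))]
      exact add_le_add ih (block ε hε K)
  refine summable_of_sum_range_le hnn (c := ∑' k : ℕ, (2 * Real.log 4 / Real.log 2 ^ (1+ε)) * (1 / (k:ℝ) ^ (1+ε))) ?_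
  intro n
  refine le_trans (Finset.sum_le_sum_of_subset_of_nonneg (Finset.range_mono (Nat.lt_two_pow_self (n := n)).le) (fun i _ _ => hnn i)) ((key n).trans ?_)
  refine hs.sum_le_tsum _ (fun k _ => ?_)
  have : 0 ≤ Real.log 4 := Real.log_nonneg (by norm_num)
  positivity

lemma bound_f (f : ℕ → ℂ) (ε : ℝ) (hε : 0 < ε) (C : ℝ) (h : ∀ᶠ x : ℝ in Filter.atTop,
        ‖∑ n ∈ Finset.Icc 1 ⌊x⌋₊, f n‖ ≤ C / (x * Real.log x ^ ε)) :
    ∃ D : ℝ, 0 < D ∧ ∀ n : ℕ, 2 ≤ n → ‖f n‖ ≤ D * hh ε n := by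
  have h1 := tendsto_natCast_atTop_atTop (R := ℝ) |>.eventually h
  have hO : f =O[atTop] hh ε := by
    obtain ⟨N, hN⟩ := eventually_atTop.mp h1
    refine Asymptotics.IsBigO.of_bound (|C| + |C| * (2 * 2 ^ ε)) ?_
    filter_upwards [eventually_ge_atTop (N + 4)] with n hn
    obtain ⟨m, rfl⟩ : ∃ m, n = m + 1 := ⟨n - 1, by omega⟩
    have ha := hN (m+1) (by omega)
    have hb := hN m (by omega)
    rw [Nat.floor_natCast] at ha hb
    have he : f (m+1) = ∑ n ∈ Finset.Icc 1 (m+1), f n - ∑ n ∈ Finset.Icc 1 m, f n := by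
      rw [Finset.sum_Icc_succ_top (by omega)]; ring
    have hm : (3:ℝ) ≤ m := by exact_mod_cast (by omega : 3 ≤ m)
    have hlm : 0 < Real.log m := Real.log_pos (by linarith)
    have hl : Real.log ((m+1 : ℕ):ℝ) / 2 ≤ Real.log m := by
      have : Real.log ((m+1 : ℕ):ℝ) ≤ Real.log ((m:ℝ)^2) :=
        Real.log_le_log (by positivity) (by push_cast; nlinarith)
      rw [Real.log_pow] at this
      push_cast at this ⊢; linarith
    have hl1 : 0 < Real.log ((m+1 : ℕ):ℝ) := Real.log_pos (by push_cast; linarith)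
    have hb' : C / (m * Real.log m ^ ε) ≤ |C| * (2 * 2 ^ ε) * hh ε (m+1) := by
      have e : |C| * (2 * 2 ^ ε) * hh ε (m+1) = |C| / ((((m+1 : ℕ):ℝ)/2) * (Real.log ((m+1 : ℕ):ℝ) / 2) ^ ε) := by
        unfold hh
        rw [Real.div_rpow hl1.le (by norm_num)]
        have : 0 < Real.log ((m+1 : ℕ):ℝ) ^ ε := by positivity
        field_simp
      rw [e]
      have : ((m+1 : ℕ):ℝ)/2 ≤ m := by push_cast; linarith
      gcongr
      exact le_abs_self C
    have ha' : C / (((m+1 : ℕ):ℝ) * Real.log ((m+1 : ℕ):ℝ) ^ ε) ≤ |C| * hh ε (m+1) := by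
      unfold hh
      rw [mul_one_div]
      gcongr
      exact le_abs_self C
    rw [Real.norm_of_nonneg (hh_nonneg ε _), he, add_mul]
    exact (norm_sub_le _ _).trans (add_le_add (ha.trans ha') (hb.trans hb'))
  obtain ⟨D, hD, hh'⟩ := Asymptotics.bound_of_isBigO_nat_atTop hO
  refine ⟨D, hD, fun n hn => ?_⟩
  have := hh' (hh_pos ε n hn).ne'
  rwa [Real.norm_of_nonneg (hh_nonneg ε n)] at this

lemma hh_pow_le (ε : ℝ) (hε : 0 < ε) (p : ℕ) (hp : 2 ≤ p) (k : ℕ) :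
    hh ε (p ^ (k+2)) ≤ (1 / (p:ℝ)^2) * (1/2)^k := by
  have hp' : (2:ℝ) ≤ p := by exact_mod_cast hp
  have h4 : (4:ℝ) ≤ ((p ^ (k+2) : ℕ) : ℝ) := by
    have : 2^2 ≤ p^(k+2) := (Nat.pow_le_pow_left hp 2).trans (Nat.pow_le_pow_right (by omega) (by omega))
    exact_mod_cast this
  have hl : 1 ≤ Real.log ((p ^ (k+2) : ℕ) : ℝ) := by
    rw [Real.le_log_iff_exp_le (by linarith)]
    have := Real.exp_one_lt_d9
    linarith
  have h1 : 1 ≤ Real.log ((p ^ (k+2) : ℕ) : ℝ) ^ ε := Real.one_le_rpow hl hε.le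
  unfold hh
  have e : (1 / (p:ℝ)^2) * (1/2)^k = 1 / (((p:ℝ)^2 * 2^k) * 1) := by
    rw [one_div_pow, mul_one]; field_simp
  rw [e]
  gcongr
  push_cast
  rw [pow_add, mul_comm]
  gcongr

lemma prime_pow_sum (r : ℕ → ℝ) (hr : ∀ n, 0 ≤ r n) (D ε : ℝ) (hD : 0 < D) (hε : 0 < ε)
    (hb : ∀ n : ℕ, 2 ≤ n → r n ≤ D * hh ε n) (p : ℕ) (hp : 2 ≤ p) :
    Summable (fun k => r (p^k)) ∧
      ∑' k, r (p^(k+1)) ≤ D * hh ε p + 2 * D * (1 / (p:ℝ)^2) := by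
  have hle : ∀ k, r (p^(k+2)) ≤ D * (1 / (p:ℝ)^2) * (1/2)^k := by
    intro k
    have : 2 ≤ p^(k+2) := hp.trans (Nat.le_self_pow (by omega) p)
    refine (hb _ this).trans ?_
    rw [mul_assoc]
    exact mul_le_mul_of_nonneg_left (hh_pow_le ε hε p hp k) hD.le
  have hg : HasSum (fun k : ℕ => D * (1 / (p:ℝ)^2) * (1/2)^k) (D * (1 / (p:ℝ)^2) * 2) :=
    hasSum_geometric_two.mul_left _
  have hs2 : Summable (fun k => r (p^(k+2))) :=
    Summable.of_nonneg_of_le (fun k => hr _) hle hg.summable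
  have hs1 : Summable (fun k => r (p^(k+1))) := (summable_nat_add_iff 1).mp hs2
  refine ⟨(summable_nat_add_iff 1).mp hs1, ?_⟩
  rw [hs1.tsum_eq_zero_add]
  have h1 := hb p hp
  have h2 : ∑' k, r (p^(k+1+1)) ≤ D * (1 / (p:ℝ)^2) * 2 := by
    rw [← hg.tsum_eq]
    exact hs2.tsum_le_tsum hle hg.summable
  simp only [zero_add, pow_one]
  linarith

lemma summable_of_primes (r : ℕ → ℝ) (hr : ∀ n, 0 ≤ r n) (hr0 : r 0 = 0) (hr1 : r 1 = 1)
    (hmul : ∀ {m n : ℕ}, Nat.Coprime m n → r (m * n) = r m * r n)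
    (b : ℕ → ℝ) (hb0 : ∀ n, 0 ≤ b n) (hbs : Summable b)
    (h : ∀ p : ℕ, p.Prime → Summable (fun k => r (p^k)) ∧ ∑' k, r (p^(k+1)) ≤ b p) :
    Summable r := by
  refine summable_of_sum_range_le hr (c := Real.exp (∑' n, b n)) ?_
  intro N
  have hE := EulerProduct.summable_and_hasSum_smoothNumbers_prod_primesBelow_tsum hr1 hmul
    (fun {p} hp => by simpa [abs_of_nonneg (hr _)] using (h p hp).1) N
  have h1 : ∑ n ∈ Finset.range N, r n ≤ ∏ p ∈ N.primesBelow, ∑' n : ℕ, r (p ^ n) := by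
    have h2 := hE.2
    replace h2 := hasSum_subtype_iff_indicator.mp h2
    refine le_trans (Finset.sum_le_sum ?_) (sum_le_hasSum (Finset.range N) ?_ h2)
    · intro n hn
      rcases Nat.eq_zero_or_pos n with rfl | hn0
      · rw [hr0]; exact Set.indicator_nonneg (fun i _ => hr i) _
      · rw [Set.indicator_of_mem (Nat.mem_smoothNumbers_of_lt hn0 (Finset.mem_range.mp hn))]
    · intro n _
      exact Set.indicator_nonneg (fun i _ => hr i) _
  refine h1.trans ?_
  calc ∏ p ∈ N.primesBelow, ∑' n : ℕ, r (p ^ n) ≤ ∏ p ∈ N.primesBelow, (1 + b p) := by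
        apply Finset.prod_le_prod
        · intro p _; exact tsum_nonneg (fun k => hr _)
        · intro p hp
          have hp' := Nat.prime_of_mem_primesBelow hp
          rw [(h p hp').1.tsum_eq_zero_add, pow_zero, hr1]
          linarith [(h p hp').2]
    _ ≤ Real.exp (∑ p ∈ N.primesBelow, b p) := Real.prod_one_add_le_exp_sum _ (fun i => hb0 i)
    _ ≤ _ := Real.exp_le_exp.mpr (hbs.sum_le_tsum _ (fun i _ => hb0 i))

theorem stmt5 (f : ℕ → ℂ) (hf : IsMO f) :
    ∀ ε : ℝ, 0 < ε →
      ¬ ∃ C : ℝ, ∀ᶠ x : ℝ in Filter.atTop,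
        ‖∑ n ∈ Finset.Icc 1 ⌊x⌋₊, f n‖ ≤ C / (x * Real.log x ^ ε) := by
  rintro ε hε ⟨C, hC⟩
  obtain ⟨⟨hf1, hfm⟩, hsum0, hfp⟩ := hf
  obtain ⟨D, hD, hDb⟩ := bound_f f ε hε C hC
  set g : ℕ → ℂ := fun n => if n = 0 then 0 else f n with hg
  have hgf : ∀ n, n ≠ 0 → g n = f n := fun n hn => by simp [hg, hn]
  have hg0 : g 0 = 0 := by simp [hg]
  have hg1 : g 1 = 1 := by rw [hgf 1 one_ne_zero, hf1]
  have hgm : ∀ {m n : ℕ}, Nat.Coprime m n → g (m * n) = g m * g n := by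
    intro m n hmn
    rcases eq_or_ne m 0 with rfl | hm
    · simp [hg0]
    rcases eq_or_ne n 0 with rfl | hn
    · simp [hg0]
    rw [hgf _ hm, hgf _ hn, hgf _ (mul_ne_zero hm hn), hfm m n hmn]
  set b : ℕ → ℝ := fun p => D * (if p.Prime then hh ε p else 0) + 2 * D * (1 / (p:ℝ)^2) with hb
  have hbs : Summable b :=
    ((summable_primes ε hε).mul_left D).add
      ((Real.summable_one_div_nat_pow.mpr (by norm_num)).mul_left (2 * D))
  have hb0 : ∀ n, 0 ≤ b n := by
    intro n
    have := hh_nonneg ε n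
    simp only [hb]
    split_ifs <;> positivity
  have hpp : ∀ p : ℕ, p.Prime → Summable (fun k => ‖g (p^k)‖) ∧ ∑' k, ‖g (p^(k+1))‖ ≤ b p := by
    intro p hp
    have := prime_pow_sum (fun n => ‖g n‖) (fun n => norm_nonneg _) D ε hD hε
      (fun n hn => by rw [hgf n (by omega)]; exact hDb n hn) p hp.two_le
    simpa [hb, hp] using this
  have hs : Summable (fun n => ‖g n‖) :=
    summable_of_primes (fun n => ‖g n‖) (fun n => norm_nonneg _) (by simp [hg0]) (by simp [hg1])
      (fun {m n} hmn => by rw [hgm hmn, norm_mul]) b hb0 hbs hpp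
  have hprod := EulerProduct.eulerProduct_tprod hg1 hgm hs hg0
  have hzero : ∑' n, g n = 0 := by
    have h1 : HasSum (fun n => g (n+1)) (∑' n, g n) := by
      have := (hasSum_nat_add_iff' 1).mpr hs.of_norm.hasSum
      simpa [hg0] using this
    have h2 := h1.tendsto_sum_nat
    refine tendsto_nhds_unique h2 (hsum0.congr fun N => ?_)
    exact Finset.sum_congr rfl fun n _ => (hgf _ (Nat.succ_ne_zero n)).symm
  have hpps : ∀ p : Nat.Primes, ∑' e, g ((p:ℕ) ^ e) = 1 + ∑' e, g ((p:ℕ)^(e+1)) := by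
    intro p
    rw [(hpp p p.2).1.of_norm.tsum_eq_zero_add, pow_zero, hg1]
  have hne : ∏' p : Nat.Primes, (1 + ∑' e, g ((p:ℕ)^(e+1))) ≠ 0 := by
    apply tprod_one_add_ne_zero_of_summable
    · intro p
      rw [← hpps p]
      obtain ⟨L, hL, hT⟩ := hfp p p.2
      have h2 := (hpp p p.2).1.of_norm.hasSum.tendsto_sum_nat
      have : ∑' e, g ((p:ℕ) ^ e) = L := by
        refine tendsto_nhds_unique h2 (hT.congr fun N => ?_)
        exact Finset.sum_congr rfl fun n _ => (hgf _ (pow_ne_zero _ p.2.ne_zero)).symm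
      rwa [this]
    · refine Summable.of_nonneg_of_le (fun p => norm_nonneg _) (fun p => ?_)
        (hbs.comp_injective (Subtype.val_injective (p := Nat.Prime)))
      have hs1 : Summable (fun k => ‖g ((p:ℕ)^(k+1))‖) := 
        (summable_nat_add_iff 1 (f := fun k => ‖g ((p:ℕ)^k)‖)).mpr (hpp p p.2).1
      exact (norm_tsum_le_tsum_norm hs1).trans (hpp p p.2).2
  apply hne
  rw [← hzero, ← hprod]
  exact tprod_congr fun p => (hpps p).symm
end

section
/- If f : ℕ → ℂ is an MO function, then for every ε > 0 the partial sums satisfy ∑_{n ≤ x} f(n) = Ω(1/(x (log log x)^{1+ε})); that is, for each ε > 0 it is NOT the case that there exists a constant C such that |∑_{n ≤ x} f(n)| ≤ C/(x (log log x)^{1+ε}) for all sufficiently large x. -/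
open Filter Finset

lemma aux_summable_log (δ : ℝ) (hδ : 1 < δ) :
    Summable (fun k : ℕ => 1 / ((k : ℝ) * Real.log k ^ δ)) := by
  have h0 : 0 ≤ᶠ[Filter.atTop] (fun k : ℕ => 1 / ((k : ℝ) * Real.log k ^ δ)) := by
    refine Filter.Eventually.of_forall fun k => ?_
    have : 0 ≤ Real.log k := Real.log_natCast_nonneg k
    simp only [Pi.zero_apply]
    positivity
  rw [← summable_condensed_iff_of_eventually_nonneg h0]
  · have hs : Summable (fun j : ℕ => (1 / (Real.log 2) ^ δ) * (1 / (j : ℝ) ^ δ)) :=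
      (Real.summable_one_div_nat_rpow.2 hδ).mul_left _
    refine hs.congr fun j => ?_
    have hl : 0 ≤ Real.log 2 := Real.log_nonneg (by norm_num)
    push_cast
    rw [Real.log_pow, Real.mul_rpow (by positivity) hl]
    have h2 : (2 : ℝ) ^ j ≠ 0 := by positivity
    rw [one_div_mul_one_div, mul_one_div, mul_comm ((j : ℝ) ^ δ), ← div_div (2 ^ j),
      div_self h2]
  · filter_upwards [Filter.eventually_ge_atTop 3] with k hk
    have hk' : (3 : ℝ) ≤ k := by exact_mod_cast hk
    have hl : 0 < Real.log k := Real.log_pos (by linarith)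
    have hl2 : Real.log k ≤ Real.log (k + 1 : ℕ) :=
      Real.log_le_log (by linarith) (by push_cast; linarith)
    apply one_div_le_one_div_of_le (by positivity)
    gcongr
    linarith

lemma aux_block (a : ℕ → ℝ) (C δ : ℝ) (hC : 0 ≤ C) (hδ : 1 < δ) (N : ℕ)
    (h : ∀ n ≥ N, a n ≤ C / ((n : ℝ) * Real.log (Real.log n) ^ δ)) (k : ℕ) (hk : 4 ≤ k)
    (hkN : N ≤ k) :
    ∑ n ∈ Finset.Ico (2 ^ k) (2 ^ (k + 1)), (if n.Prime then a n else 0) ≤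
      (4 * C * 2 ^ δ) * (1 / ((k : ℝ) * Real.log k ^ δ)) := by
  have hk4 : (4 : ℝ) ≤ k := by exact_mod_cast hk
  have hl2 : 1 / 2 < Real.log 2 := by linarith [Real.log_two_gt_d9]
  have hlk : 0 < Real.log k := Real.log_pos (by linarith)
  set l : ℝ := Real.log k / 2 with hl
  have hl0 : 0 < l := by positivity
  have hpow : (0 : ℝ) < 2 ^ k := by positivity
  have hld : 0 < l ^ δ := by positivity
  have key : ∀ n ∈ (Finset.Ico (2 ^ k) (2 ^ (k + 1))).filter Nat.Prime,
      a n ≤ C / (2 ^ k * l ^ δ * (k * Real.log 2)) * Real.log n := by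
    intro n hn
    simp only [Finset.mem_filter, Finset.mem_Ico] at hn
    obtain ⟨⟨hn1, hn2⟩, hp⟩ := hn
    have hnr : (2 : ℝ) ^ k ≤ n := by exact_mod_cast hn1
    have hlog : k * Real.log 2 ≤ Real.log n := by
      rw [← Real.log_pow]; exact Real.log_le_log hpow hnr
    have hsq : Real.sqrt k ≤ Real.log n := by
      refine le_trans ?_ hlog
      rw [Real.sqrt_le_left (by positivity)]
      nlinarith [mul_pos (show (0 : ℝ) < k by linarith) (show (0 : ℝ) < k by linarith),
        mul_self_nonneg (Real.log 2 - 1 / 2), mul_le_mul hk4 (show (1 : ℝ) / 4 ≤ Real.log 2 ^ 2 by nlinarith) (by norm_num) (by linarith)]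
    have hll : l ≤ Real.log (Real.log n) := by
      rw [hl, ← Real.log_sqrt (by linarith)]
      exact Real.log_le_log (Real.sqrt_pos.2 (by linarith)) hsq
    have hNn : N ≤ n := hkN.trans (Nat.lt_two_pow_self.le.trans hn1)
    calc a n ≤ C / ((n : ℝ) * Real.log (Real.log n) ^ δ) := h n hNn
      _ ≤ C / (2 ^ k * l ^ δ) := by gcongr
      _ = C / (2 ^ k * l ^ δ * (k * Real.log 2)) * (k * Real.log 2) := by
        field_simp
      _ ≤ _ := by gcongr
  rw [← Finset.sum_filter]
  refine (Finset.sum_le_sum key).trans ?_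
  rw [← Finset.mul_sum]
  have hth : ∑ n ∈ (Finset.Ico (2 ^ k) (2 ^ (k + 1))).filter Nat.Prime, Real.log n ≤
      Real.log 4 * (2 ^ (k + 1) : ℕ) := by
    refine le_trans ?_ (Chebyshev.theta_le_log4_mul_x (by positivity))
    rw [Chebyshev.theta_eq_sum_Icc, Nat.floor_natCast]
    apply Finset.sum_le_sum_of_subset_of_nonneg
    · intro n hn
      simp only [Finset.mem_filter, Finset.mem_Ico, Finset.mem_Icc] at hn ⊢
      exact ⟨⟨Nat.zero_le _, hn.1.2.le⟩, hn.2⟩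
    · intro i _ _
      exact Real.log_natCast_nonneg i
  have h4 : Real.log 4 = 2 * Real.log 2 := by
    rw [show (4 : ℝ) = 2 ^ 2 by norm_num, Real.log_pow]; norm_num
  have hld2 : l ^ δ = Real.log k ^ δ / 2 ^ δ := Real.div_rpow hlk.le (by norm_num) δ
  have hlkd : 0 < Real.log k ^ δ := by positivity
  have h2d : (0 : ℝ) < 2 ^ δ := by positivity
  refine (mul_le_mul_of_nonneg_left hth (by positivity)).trans (le_of_eq ?_)
  rw [h4, hld2]
  push_cast
  field_simp
  ring

lemma aux_prime_sum (a : ℕ → ℝ) (ha : ∀ n, 0 ≤ a n) (C δ : ℝ) (hC : 0 ≤ C) (hδ : 1 < δ) (N : ℕ)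
    (h : ∀ n ≥ N, a n ≤ C / ((n : ℝ) * Real.log (Real.log n) ^ δ)) :
    Summable (fun n : ℕ => if n.Prime then a n else 0) := by
  set A : ℕ → ℝ := fun n => if n.Prime then a n else 0 with hA
  have hA0 : ∀ n, 0 ≤ A n := fun n => by
    simp only [hA]; split_ifs <;> simp [ha]
  set β : ℕ → ℝ := fun k => ∑ n ∈ Finset.Ico (2 ^ k) (2 ^ (k + 1)), A n with hβ
  have hβ0 : ∀ k, 0 ≤ β k := fun k => Finset.sum_nonneg fun n _ => hA0 n
  have hsβ : Summable β := by
    refine Summable.of_norm_bounded_eventually_nat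
      ((aux_summable_log δ hδ).mul_left (4 * C * 2 ^ δ)) ?_
    filter_upwards [Filter.eventually_ge_atTop 4, Filter.eventually_ge_atTop N] with k hk hkN
    rw [Real.norm_of_nonneg (hβ0 k)]
    exact aux_block a C δ hC hδ N h k hk hkN
  have hpart : ∀ K, ∑ n ∈ Finset.range (2 ^ K), A n = A 0 + ∑ k ∈ Finset.range K, β k := by
    intro K
    induction K with
    | zero => simp
    | succ K ih =>
      rw [Finset.sum_range_succ, ← add_assoc, ← ih, hβ,
        Finset.sum_range_add_sum_Ico _ (Nat.pow_le_pow_right (by norm_num) (Nat.le_succ K))]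
  refine summable_of_sum_range_le hA0 (c := A 0 + ∑' k, β k) fun n => ?_
  calc ∑ i ∈ Finset.range n, A i ≤ ∑ i ∈ Finset.range (2 ^ n), A i :=
        Finset.sum_le_sum_of_subset_of_nonneg
          (Finset.range_subset_range.2 Nat.lt_two_pow_self.le) fun i _ _ => hA0 i
    _ = A 0 + ∑ k ∈ Finset.range n, β k := hpart n
    _ ≤ _ := by
      have := hsβ.sum_le_tsum (Finset.range n) fun i _ => hβ0 i
      linarith

lemma aux_pow_tail (g : ℕ → ℝ) (hg0 : ∀ n, 0 ≤ g n) (M : ℝ) (hM : 0 ≤ M)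
    (hb : ∀ n, 0 < n → g n ≤ M / n) (p : ℕ) (hp : p.Prime) :
    Summable (fun k : ℕ => g (p ^ k)) ∧
      ∑' k : ℕ, g (p ^ (k + 1)) ≤ g p + 2 * M * (1 / (p : ℝ) ^ 2) := by
  have hp2 : (2 : ℝ) ≤ p := by exact_mod_cast hp.two_le
  have hp0 : (0 : ℝ) < p := by linarith
  set r : ℝ := (p : ℝ)⁻¹ with hr
  have hr0 : 0 < r := by positivity
  have hr1 : r ≤ 1 / 2 := by
    rw [hr, ← one_div]; exact one_div_le_one_div_of_le (by norm_num) hp2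
  have hbd : ∀ k, g (p ^ k) ≤ M * r ^ k := fun k => by
    have := hb (p ^ k) (pow_pos hp.pos k)
    push_cast at this
    rwa [div_eq_mul_inv, ← inv_pow] at this
  have hgeo : Summable (fun k : ℕ => M * r ^ k) :=
    (summable_geometric_of_lt_one hr0.le (by linarith)).mul_left M
  have hs : Summable (fun k : ℕ => g (p ^ k)) :=
    Summable.of_nonneg_of_le (fun k => hg0 _) hbd hgeo
  refine ⟨hs, ?_⟩
  have hs1 : Summable (fun k : ℕ => g (p ^ (k + 1))) := (summable_nat_add_iff 1).2 hs
  have hs2 : Summable (fun k : ℕ => g (p ^ (k + 1 + 1))) := (summable_nat_add_iff 1).2 hs1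
  rw [hs1.tsum_eq_zero_add]
  simp only [zero_add, pow_one]
  have hgeo2 : Summable (fun k : ℕ => M * r ^ 2 * r ^ k) :=
    (summable_geometric_of_lt_one hr0.le (by linarith)).mul_left _
  have h1 : ∑' k : ℕ, g (p ^ (k + 1 + 1)) ≤ ∑' k : ℕ, M * r ^ 2 * r ^ k :=
    hs2.tsum_le_tsum (fun k => (hbd _).trans (le_of_eq (by ring))) hgeo2
  rw [tsum_mul_left, tsum_geometric_of_lt_one hr0.le (by linarith)] at h1
  have h2 : (1 - r)⁻¹ ≤ 2 := by
    rw [inv_le_comm₀ (by linarith) (by norm_num)]; linarith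
  have h3 : M * r ^ 2 * (1 - r)⁻¹ ≤ M * r ^ 2 * 2 :=
    mul_le_mul_of_nonneg_left h2 (by positivity)
  have h4 : 1 / (p : ℝ) ^ 2 = r ^ 2 := by rw [hr, inv_pow, one_div]
  rw [h4]
  linarith

lemma aux_tail_summable (g : ℕ → ℝ) (hg0 : ∀ n, 0 ≤ g n) (M : ℝ) (hM : 0 ≤ M)
    (hb : ∀ n, 0 < n → g n ≤ M / n)
    (hp : Summable (fun n : ℕ => if n.Prime then g n else 0)) :
    Summable (fun n : ℕ => if n.Prime then ∑' k : ℕ, g (n ^ (k + 1)) else 0) := by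
  have hs2 : Summable (fun n : ℕ => 2 * M * (1 / (n : ℝ) ^ 2)) :=
    (Real.summable_one_div_nat_pow.2 (by norm_num)).mul_left _
  refine Summable.of_nonneg_of_le (fun n => ?_) (fun n => ?_) (hp.add hs2)
  · split_ifs
    · exact tsum_nonneg fun k => hg0 _
    · exact le_rfl
  · split_ifs with h
    · exact (aux_pow_tail g hg0 M hM hb n h).2
    · positivity

lemma aux_abs_summable (g : ℕ → ℝ) (hg0 : ∀ n, 0 ≤ g n) (hz : g 0 = 0) (h1 : g 1 = 1)
    (hmul : ∀ {m n : ℕ}, Nat.Coprime m n → g (m * n) = g m * g n) (M : ℝ) (hM : 0 ≤ M)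
    (hb : ∀ n, 0 < n → g n ≤ M / n)
    (hp : Summable (fun n : ℕ => if n.Prime then g n else 0)) : Summable g := by
  have hT := aux_tail_summable g hg0 M hM hb hp
  set T : ℕ → ℝ := fun n : ℕ => if n.Prime then ∑' k : ℕ, g (n ^ (k + 1)) else 0 with hTdef
  have hT0 : ∀ n, 0 ≤ T n := fun n => by
    simp only [hTdef]
    split_ifs
    · exact tsum_nonneg fun k => hg0 _
    · exact le_rfl
  refine summable_of_sum_range_le hg0 (c := Real.exp (∑' n, T n)) fun N => ?_
  have hE := EulerProduct.summable_and_hasSum_smoothNumbers_prod_primesBelow_tsum h1 hmul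
    (fun {p} hp => by
      simpa [Real.norm_of_nonneg (hg0 _)] using (aux_pow_tail g hg0 M hM hb p hp).1) N
  have hsm : Summable (Set.indicator (N.smoothNumbers) g) :=
    summable_subtype_iff_indicator.1 hE.2.summable
  have htot : ∑' n, Set.indicator (N.smoothNumbers) g n =
      ∏ p ∈ N.primesBelow, ∑' n : ℕ, g (p ^ n) := by
    rw [← _root_.tsum_subtype]; exact hE.2.tsum_eq
  calc ∑ i ∈ Finset.range N, g i
      = ∑ i ∈ Finset.range N, Set.indicator (N.smoothNumbers) g i := by
        refine Finset.sum_congr rfl fun i hi => ?_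
        rcases Nat.eq_zero_or_pos i with rfl | hi0
        · by_cases h : 0 ∈ N.smoothNumbers <;> simp [h, hz]
        · rw [Set.indicator_of_mem (Nat.mem_smoothNumbers_of_lt hi0 (Finset.mem_range.1 hi))]
    _ ≤ ∏ p ∈ N.primesBelow, ∑' n : ℕ, g (p ^ n) := by
        rw [← htot]
        exact hsm.sum_le_tsum _ fun i _ => Set.indicator_nonneg (fun n _ => hg0 n) i
    _ ≤ ∏ p ∈ N.primesBelow, Real.exp (T p) := by
        refine Finset.prod_le_prod (fun p _ => tsum_nonneg fun k => hg0 _) fun p hp => ?_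
        have hpp := Nat.prime_of_mem_primesBelow hp
        rw [(aux_pow_tail g hg0 M hM hb p hpp).1.tsum_eq_zero_add, pow_zero, h1]
        simp only [hTdef, if_pos hpp]
        rw [add_comm]
        exact Real.add_one_le_exp _
    _ = Real.exp (∑ p ∈ N.primesBelow, T p) := (Real.exp_sum _ _).symm
    _ ≤ _ := Real.exp_le_exp.2 (hT.sum_le_tsum _ fun i _ => hT0 i)

lemma aux_ne_zero (g : ℕ → ℂ) (hz : g 0 = 0) (h1 : g 1 = 1)
    (hmul : ∀ {m n : ℕ}, Nat.Coprime m n → g (m * n) = g m * g n) (M : ℝ) (hM : 0 ≤ M)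
    (hb : ∀ n, 0 < n → ‖g n‖ ≤ M / n)
    (hp : Summable (fun n : ℕ => if n.Prime then ‖g n‖ else 0))
    (hL : ∀ p : ℕ, p.Prime → ∃ L : ℂ, L ≠ 0 ∧ SeriesTendsTo (fun k => g (p ^ k)) L) :
    Summable g ∧ ∑' n, g n ≠ 0 := by
  have hn0 : ∀ n, 0 ≤ ‖g n‖ := fun n => norm_nonneg _
  have hsum : Summable (fun n => ‖g n‖) :=
    aux_abs_summable (fun n => ‖g n‖) hn0 (by simp [hz]) (by simp [h1])
      (fun {m n} h => by simp [hmul h]) M hM hb hp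
  refine ⟨hsum.of_norm, ?_⟩
  rw [← EulerProduct.eulerProduct_tprod h1 hmul hsum hz]
  have hps : ∀ p : Nat.Primes, Summable (fun k : ℕ => ‖g ((p : ℕ) ^ k)‖) := fun p =>
    (aux_pow_tail (fun n => ‖g n‖) hn0 M hM hb p p.2).1
  have hps1 : ∀ p : Nat.Primes, Summable (fun k : ℕ => ‖g ((p : ℕ) ^ (k + 1))‖) := fun p =>
    (summable_nat_add_iff 1).2 (hps p)
  have hsplit : ∀ p : Nat.Primes, ∑' e, g ((p : ℕ) ^ e) = 1 + ∑' k : ℕ, g ((p : ℕ) ^ (k + 1)) := by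
    intro p
    rw [(hps p).of_norm.tsum_eq_zero_add, pow_zero, h1]
  have heq : (∏' p : Nat.Primes, ∑' e, g ((p : ℕ) ^ e)) =
      ∏' p : Nat.Primes, (1 + ∑' k : ℕ, g ((p : ℕ) ^ (k + 1))) := tprod_congr hsplit
  rw [heq]
  refine tprod_one_add_ne_zero_of_summable (fun p => ?_) ?_
  · rw [← hsplit p]
    obtain ⟨L, hL0, hLt⟩ := hL p p.2
    have := tendsto_nhds_unique (hps p).of_norm.hasSum.tendsto_sum_nat hLt
    rwa [this]
  · have hT := aux_tail_summable (fun n => ‖g n‖) hn0 M hM hb hp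
    have hT2 := hT.comp_injective (i := fun p : Nat.Primes => (p : ℕ)) Subtype.val_injective
    refine Summable.of_nonneg_of_le (fun p => norm_nonneg _) (fun p => ?_) hT2
    simp only [Function.comp_apply, if_pos p.2]
    exact norm_tsum_le_tsum_norm (hps1 p)

lemma aux_term_bound (f : ℕ → ℂ) (C ε : ℝ)
    (h : ∀ᶠ x : ℝ in Filter.atTop,
        ‖∑ n ∈ Finset.Icc 1 ⌊x⌋₊, f n‖ ≤ C / (x * Real.log (Real.log x) ^ (1 + ε))) :
    ∃ N : ℕ, 16 ≤ N ∧ ∀ n ≥ N, ‖f n‖ ≤ 2 * |C| / ((n : ℝ) * Real.log (Real.log n) ^ (1 + ε)) := by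
  obtain ⟨X, hX⟩ := Filter.eventually_atTop.1 h
  refine ⟨max 16 (⌈X⌉₊ + 1), le_max_left _ _, fun n hn => ?_⟩
  have hn16 : 16 ≤ n := (le_max_left _ _).trans hn
  have hnX : ⌈X⌉₊ + 1 ≤ n := (le_max_right _ _).trans hn
  have hXn : X ≤ (n : ℝ) - 1 := by
    have h1 : X ≤ ⌈X⌉₊ := Nat.le_ceil X
    have h2 : ((⌈X⌉₊ + 1 : ℕ) : ℝ) ≤ n := by exact_mod_cast hnX
    push_cast at h2
    linarith
  have hnr : (16 : ℝ) ≤ n := by exact_mod_cast hn16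
  have hlog : 1 < Real.log n := by
    rw [Real.lt_log_iff_exp_lt (by linarith)]
    linarith [Real.exp_one_lt_d9]
  have hll : 0 < Real.log (Real.log n) := Real.log_pos hlog
  obtain ⟨m, rfl⟩ : ∃ m, n = m + 1 := ⟨n - 1, by omega⟩
  set B : ℝ → ℝ := fun x => C / (x * Real.log (Real.log x) ^ (1 + ε)) with hB
  have hF1 : ‖∑ j ∈ Finset.Icc 1 (m + 1), f j‖ ≤ B ((m + 1 : ℕ) : ℝ) := by
    have := hX ((m + 1 : ℕ) : ℝ) (by linarith)
    rwa [Nat.floor_natCast] at this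
  have hcont : ContinuousAt B ((m + 1 : ℕ) : ℝ) := by
    have c1 : ContinuousAt Real.log ((m + 1 : ℕ) : ℝ) := Real.continuousAt_log (by linarith)
    have c2 : ContinuousAt (fun x => Real.log (Real.log x)) ((m + 1 : ℕ) : ℝ) :=
      c1.log (by linarith)
    have c3 : ContinuousAt (fun x => Real.log (Real.log x) ^ (1 + ε)) ((m + 1 : ℕ) : ℝ) :=
      c2.rpow_const (Or.inl hll.ne')
    refine continuousAt_const.div (continuousAt_id.mul c3) ?_
    have : 0 < Real.log (Real.log ((m + 1 : ℕ) : ℝ)) ^ (1 + ε) := by positivity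
    exact (mul_pos (by linarith) this).ne'
  have hF2 : ‖∑ j ∈ Finset.Icc 1 m, f j‖ ≤ B ((m + 1 : ℕ) : ℝ) := by
    have ht : Filter.Tendsto B (nhdsWithin ((m + 1 : ℕ) : ℝ) (Set.Iio ((m + 1 : ℕ) : ℝ)))
        (nhds (B ((m + 1 : ℕ) : ℝ))) := hcont.tendsto.mono_left nhdsWithin_le_nhds
    refine ge_of_tendsto ht ?_
    have hIoo : Set.Ioo (m : ℝ) ((m + 1 : ℕ) : ℝ) ∈
        nhdsWithin ((m + 1 : ℕ) : ℝ) (Set.Iio ((m + 1 : ℕ) : ℝ)) :=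
      Ioo_mem_nhdsLT (by push_cast; linarith)
    filter_upwards [hIoo] with x hx
    have hx1 := hx.1
    have hx2 := hx.2
    push_cast at hx2 hXn
    have hfl : ⌊x⌋₊ = m := by
      rw [Nat.floor_eq_iff ((Nat.cast_nonneg m).trans hx1.le)]
      exact ⟨hx1.le, hx2⟩
    have := hX x (by linarith)
    rwa [hfl] at this
  have hfm : f (m + 1) = ∑ j ∈ Finset.Icc 1 (m + 1), f j - ∑ j ∈ Finset.Icc 1 m, f j := by
    rw [Finset.sum_Icc_succ_top (by omega)]; ring
  have hden : 0 < ((m + 1 : ℕ) : ℝ) * Real.log (Real.log ((m + 1 : ℕ) : ℝ)) ^ (1 + ε) := by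
    have : 0 < Real.log (Real.log ((m + 1 : ℕ) : ℝ)) ^ (1 + ε) := by positivity
    exact mul_pos (by linarith) this
  have hBle : B ((m + 1 : ℕ) : ℝ) ≤
      |C| / (((m + 1 : ℕ) : ℝ) * Real.log (Real.log ((m + 1 : ℕ) : ℝ)) ^ (1 + ε)) :=
    div_le_div_of_nonneg_right (le_abs_self C) hden.le
  have h3 := norm_sub_le (∑ j ∈ Finset.Icc 1 (m + 1), f j) (∑ j ∈ Finset.Icc 1 m, f j)
  rw [← hfm] at h3
  rw [mul_div_assoc]
  linarith

lemma aux_global_bound (g : ℕ → ℝ) (hg0 : ∀ n, 0 ≤ g n) (C ε : ℝ) (hC : 0 ≤ C) (hε : 0 < ε)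
    (N : ℕ) (h : ∀ n ≥ N, g n ≤ C / ((n : ℝ) * Real.log (Real.log n) ^ (1 + ε))) :
    ∃ M : ℝ, 0 ≤ M ∧ ∀ n, 0 < n → g n ≤ M / n := by
  have hll : ∀ᶠ n : ℕ in Filter.atTop, 1 ≤ Real.log (Real.log n) :=
    (Real.tendsto_log_atTop.comp
      (Real.tendsto_log_atTop.comp tendsto_natCast_atTop_atTop)).eventually_ge_atTop 1
  obtain ⟨K, hK⟩ := Filter.eventually_atTop.1 hll
  set R := max N K with hR
  have hS : ∀ n : ℕ, 0 ≤ (n : ℝ) * g n := fun n => mul_nonneg (Nat.cast_nonneg n) (hg0 n)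
  have hS' : 0 ≤ ∑ n ∈ Finset.range R, (n : ℝ) * g n := Finset.sum_nonneg fun n _ => hS n
  refine ⟨C + ∑ n ∈ Finset.range R, (n : ℝ) * g n, by positivity, fun n hn => ?_⟩
  have hn' : (0 : ℝ) < n := by exact_mod_cast hn
  rw [le_div_iff₀ hn', mul_comm]
  rcases lt_or_ge n R with hlt | hge
  · have := Finset.single_le_sum (f := fun n : ℕ => (n : ℝ) * g n) (fun i _ => hS i)
      (Finset.mem_range.2 hlt)
    linarith
  · have h1 := hK n ((le_max_right _ _).trans hge)
    have h2 := h n ((le_max_left _ _).trans hge)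
    have h3 : 1 ≤ Real.log (Real.log n) ^ (1 + ε) := Real.one_le_rpow h1 (by linarith)
    have h4 : C / ((n : ℝ) * Real.log (Real.log n) ^ (1 + ε)) ≤ C / n := by
      apply div_le_div_of_nonneg_left hC hn'
      nlinarith
    have h5 : (n : ℝ) * g n ≤ n * (C / n) := mul_le_mul_of_nonneg_left (h2.trans h4) hn'.le
    rw [mul_div_cancel₀ _ hn'.ne'] at h5
    linarith

theorem stmt7 (f : ℕ → ℂ) (hf : IsMO f) :
    ∀ ε : ℝ, 0 < ε →
      ¬ ∃ C : ℝ, ∀ᶠ x : ℝ in Filter.atTop,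
        ‖∑ n ∈ Finset.Icc 1 ⌊x⌋₊, f n‖ ≤ C / (x * Real.log (Real.log x) ^ (1 + ε)) := by
  rintro ε hε ⟨C, hC⟩
  obtain ⟨⟨hf1, hfm⟩, hsum0, hloc⟩ := hf
  obtain ⟨N, hN16, hN⟩ := aux_term_bound f C ε hC
  set g : ℕ → ℂ := fun n => if n = 0 then 0 else f n with hg
  have hgf : ∀ n, n ≠ 0 → g n = f n := fun n hn => by simp [hg, hn]
  have hgN : ∀ n ≥ N, ‖g n‖ ≤ 2 * |C| / ((n : ℝ) * Real.log (Real.log n) ^ (1 + ε)) := by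
    intro n hn
    rw [hgf n (by omega)]
    exact hN n hn
  have hg1 : g 1 = 1 := by rw [hgf 1 one_ne_zero, hf1]
  have hgz : g 0 = 0 := by simp [hg]
  have hgm : ∀ {m n : ℕ}, Nat.Coprime m n → g (m * n) = g m * g n := by
    intro m n hmn
    rcases eq_or_ne m 0 with rfl | hm
    · simp [hgz]
    rcases eq_or_ne n 0 with rfl | hn
    · simp [hgz]
    rw [hgf _ (mul_ne_zero hm hn), hgf _ hm, hgf _ hn, hfm m n hmn]
  have hC2 : 0 ≤ 2 * |C| := by positivity
  obtain ⟨M, hM, hMb⟩ := aux_global_bound (fun n => ‖g n‖) (fun n => norm_nonneg _)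
    (2 * |C|) ε hC2 hε N hgN
  have hps := aux_prime_sum (fun n => ‖g n‖) (fun n => norm_nonneg _)
    (2 * |C|) (1 + ε) hC2 (by linarith) N hgN
  obtain ⟨hs, hne⟩ := aux_ne_zero g hgz hg1 hgm M hM hMb hps (fun p hp => by
    obtain ⟨L, hL0, hL⟩ := hloc p hp
    refine ⟨L, hL0, ?_⟩
    have : (fun k => g (p ^ k)) = fun k => f (p ^ k) :=
      funext fun k => hgf _ (pow_ne_zero k hp.ne_zero)
    rwa [this])
  apply hne
  rw [hs.tsum_eq_zero_add, hgz, zero_add]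
  have hs1 : Summable (fun n => g (n + 1)) := (summable_nat_add_iff 1).2 hs
  have heq : (fun n => g (n + 1)) = fun n => f (n + 1) :=
    funext fun n => hgf _ (Nat.succ_ne_zero n)
  have ht := hs1.hasSum.tendsto_sum_nat
  simp only [heq] at ht ⊢
  exact tendsto_nhds_unique ht hsum0
end

section
/- The function n ↦ μ(n)/n, where μ is the Möbius function, is an MO function: it is multiplicative, the series ∑_{n=1}^∞ μ(n)/n converges to 0, and for every prime p the series ∑_{k=0}^∞ μ(p^k)/p^k converges to 1 − 1/p ≠ 0. -/
open Filter Finset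

section Aux
open MeasureTheory Topology
open scoped FourierTransform SchwartzMap

lemma kernel_exists : ∃ k K : ℝ → ℂ, Continuous k ∧ HasCompactSupport k ∧ Continuous K ∧
    Integrable K ∧ Integrable (fun v => |v| * ‖K v‖) ∧
    (∀ v, K v = ∫ t : ℝ, k t * Complex.exp (((-2 * Real.pi * t * v : ℝ) : ℂ) * Complex.I)) ∧
    ∫ v, K v = 1 := by
  let b : ContDiffBump (0 : ℝ) := ⟨1, 2, one_pos, one_lt_two⟩
  have hk : HasCompactSupport (fun t => (b t : ℂ)) :=
    b.hasCompactSupport.comp_left (g := fun x : ℝ => (x : ℂ)) (by simp)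
  have hs : ContDiff ℝ (⊤ : ℕ∞) (fun t => (b t : ℂ)) :=
    Complex.ofRealCLM.contDiff.comp b.contDiff
  let φ : 𝓢(ℝ, ℂ) := hk.toSchwartzMap hs
  have hφ : ∀ t, φ t = (b t : ℂ) := fun t => rfl
  let K : 𝓢(ℝ, ℂ) := 𝓕 φ
  refine ⟨fun t => (b t : ℂ), K, hs.continuous, hk, K.continuous, K.integrable, ?_, ?_, ?_⟩
  · simpa using K.integrable_pow_mul volume 1
  · intro v
    change (𝓕 φ) v = _
    rw [SchwartzMap.fourier_coe, Real.fourier_real_eq_integral_exp_smul]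
    refine integral_congr_ae (Eventually.of_forall fun t => ?_)
    simp only [hφ, smul_eq_mul]
    ring
  · have h1 : 𝓕⁻ K = φ := FourierTransform.fourierInv_fourier_eq φ
    have h2 : (𝓕⁻ K) 0 = φ 0 := by rw [h1]
    rw [SchwartzMap.fourierInv_coe, Real.fourierInv_eq'] at h2
    have : b 0 = 1 := b.one_of_mem_closedBall (by simp [b])
    simpa [hφ, this] using h2

section
variable {F : ℝ → ℂ} {G : ℂ → ℂ} {k K : ℝ → ℂ} 

lemma taub_A (hFm : Measurable F) (hb : ∀ u, ‖F u‖ ≤ 2)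
    (hL : ∀ s : ℂ, 0 < s.re → ∫ u in Set.Ioi (0 : ℝ), F u * Complex.exp (-(s * u)) = G s)
    (hk : Continuous k) (hkc : HasCompactSupport k)
    (hK : ∀ v, K v = ∫ t : ℝ, k t * Complex.exp (((-2 * Real.pi * t * v : ℝ) : ℂ) * Complex.I))
    (l x ε : ℝ) (hε : 0 < ε) :
    ∫ u in Set.Ioi (0 : ℝ), F u * (Real.exp (-ε * u) : ℂ) * K (l * (x - u)) =
      ∫ t : ℝ, k t * Complex.exp (((-2 * Real.pi * t * (l * x) : ℝ) : ℂ) * Complex.I) *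
        G (ε + (-2 * Real.pi * l * t : ℝ) * Complex.I) := by
  have e1 : ∀ u : ℝ, F u * (Real.exp (-ε * u) : ℂ) * K (l * (x - u)) =
      ∫ t : ℝ, (F u * (Real.exp (-ε * u) : ℂ)) * (k t) *
        Complex.exp (((-2 * Real.pi * t * (l * (x - u)) : ℝ) : ℂ) * Complex.I) := by
    intro u
    rw [hK, ← integral_const_mul]
    simp only [mul_assoc]
  simp_rw [e1]
  rw [integral_integral_swap]
  · refine integral_congr_ae (Eventually.of_forall fun t => ?_)
    simp only
    rw [← hL _ (by simpa using hε), ← integral_const_mul]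
    refine integral_congr_ae (Eventually.of_forall fun u => ?_)
    simp only
    have : (Real.exp (-ε * u) : ℂ) *
        Complex.exp (((-2 * Real.pi * t * (l * (x - u)) : ℝ) : ℂ) * Complex.I) =
        Complex.exp (((-2 * Real.pi * t * (l * x) : ℝ) : ℂ) * Complex.I) *
        Complex.exp (-((ε + (-2 * Real.pi * l * t : ℝ) * Complex.I) * u)) := by
      rw [Complex.ofReal_exp, ← Complex.exp_add, ← Complex.exp_add]
      congr 1
      push_cast
      ring
    linear_combination (F u * k t) * this
  · have hi1 : Integrable (fun u : ℝ => F u * (Real.exp (-ε * u) : ℂ))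
        (volume.restrict (Set.Ioi 0)) := by
      refine Integrable.bdd_mul (c := 2) ?_ hFm.aestronglyMeasurable (Eventually.of_forall hb)
      exact (exp_neg_integrableOn_Ioi 0 hε).ofReal
    have hi2 : Integrable k := hk.integrable_of_hasCompactSupport hkc
    have := hi1.mul_prod hi2
    refine (this.mul_bdd (c := 1) ?_ (Eventually.of_forall ?_) :)
    · refine Continuous.aestronglyMeasurable ?_
      fun_prop
    · intro z
      rw [Complex.norm_exp_ofReal_mul_I]

lemma taub_B (hFm : Measurable F) (hb : ∀ u, ‖F u‖ ≤ 2)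
    (hG : ContinuousOn G {s | 0 ≤ s.re})
    (hL : ∀ s : ℂ, 0 < s.re → ∫ u in Set.Ioi (0 : ℝ), F u * Complex.exp (-(s * u)) = G s)
    (hk : Continuous k) (hkc : HasCompactSupport k) (hKc : Continuous K) (hKi : Integrable K)
    (hK : ∀ v, K v = ∫ t : ℝ, k t * Complex.exp (((-2 * Real.pi * t * v : ℝ) : ℂ) * Complex.I))
    (l x : ℝ) (hl : 0 < l) :
    ∫ u in Set.Ioi (0 : ℝ), F u * K (l * (x - u)) =
      ∫ t : ℝ, k t * Complex.exp (((-2 * Real.pi * t * (l * x) : ℝ) : ℂ) * Complex.I) *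
        G ((-2 * Real.pi * l * t : ℝ) * Complex.I) := by
  have hKi' : Integrable (fun u => K (l * (x - u))) :=
    (hKi.comp_mul_left' hl.ne').comp_sub_left x
  have T1 : Tendsto (fun ε : ℝ => ∫ u in Set.Ioi (0 : ℝ), F u * (Real.exp (-ε * u) : ℂ) * K (l * (x - u)))
      (𝓝[>] 0) (𝓝 (∫ u in Set.Ioi (0 : ℝ), F u * K (l * (x - u)))) := by
    refine tendsto_integral_filter_of_dominated_convergence (fun u => 2 * ‖K (l * (x - u))‖) ?_ ?_ ?_ ?_
    · refine Eventually.of_forall fun ε => ?_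
      refine (hFm.aestronglyMeasurable.mul ?_).mul ?_
      · exact Continuous.aestronglyMeasurable (by fun_prop)
      · exact Continuous.aestronglyMeasurable (by fun_prop)
    · filter_upwards [self_mem_nhdsWithin] with ε hε
      filter_upwards [ae_restrict_mem measurableSet_Ioi] with u hu
      have hε : 0 < ε := hε
      have hu : 0 < u := hu
      rw [norm_mul, norm_mul, Complex.norm_real, Real.norm_eq_abs, abs_of_pos (Real.exp_pos _)]
      have : Real.exp (-ε * u) ≤ 1 := by
        rw [Real.exp_le_one_iff]; nlinarith
      have h2 := hb u
      have : ‖F u‖ * Real.exp (-ε * u) ≤ 2 * 1 := by gcongr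
      gcongr
      linarith
    · exact (hKi'.norm.const_mul 2).integrableOn
    · refine Eventually.of_forall fun u => ?_
      have : Continuous (fun ε : ℝ => F u * (Real.exp (-ε * u) : ℂ) * K (l * (x - u))) := by fun_prop
      have := (this.tendsto 0).mono_left (nhdsWithin_le_nhds (s := Set.Ioi 0))
      simpa using this
  have T2 : Tendsto (fun ε : ℝ => ∫ t : ℝ, k t *
        Complex.exp (((-2 * Real.pi * t * (l * x) : ℝ) : ℂ) * Complex.I) *
        G ((|ε| : ℝ) + (-2 * Real.pi * l * t : ℝ) * Complex.I))
      (𝓝[>] 0) (𝓝 (∫ t : ℝ, k t *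
        Complex.exp (((-2 * Real.pi * t * (l * x) : ℝ) : ℂ) * Complex.I) *
        G ((-2 * Real.pi * l * t : ℝ) * Complex.I))) := by
    have hc : Continuous (fun p : ℝ × ℝ => k p.2 *
        Complex.exp (((-2 * Real.pi * p.2 * (l * x) : ℝ) : ℂ) * Complex.I) *
        G ((|p.1| : ℝ) + (-2 * Real.pi * l * p.2 : ℝ) * Complex.I)) := by
      refine Continuous.mul (by fun_prop) ?_
      refine hG.comp_continuous (by fun_prop) ?_
      intro p
      simp
    have h := continuous_parametric_integral_of_continuous 
      (μ := volume) (f := fun ε t : ℝ => k t *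
        Complex.exp (((-2 * Real.pi * t * (l * x) : ℝ) : ℂ) * Complex.I) *
        G ((|ε| : ℝ) + (-2 * Real.pi * l * t : ℝ) * Complex.I)) hc hkc.isCompact
    have e : ∀ ε : ℝ, ∫ t in tsupport k, k t *
        Complex.exp (((-2 * Real.pi * t * (l * x) : ℝ) : ℂ) * Complex.I) *
        G ((|ε| : ℝ) + (-2 * Real.pi * l * t : ℝ) * Complex.I) = ∫ t : ℝ, k t *
        Complex.exp (((-2 * Real.pi * t * (l * x) : ℝ) : ℂ) * Complex.I) *
        G ((|ε| : ℝ) + (-2 * Real.pi * l * t : ℝ) * Complex.I) := by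
      intro ε
      refine setIntegral_eq_integral_of_forall_compl_eq_zero fun t ht => ?_
      rw [image_eq_zero_of_notMem_tsupport ht]; simp
    simp_rw [e] at h
    have := (h.tendsto 0).mono_left (nhdsWithin_le_nhds (s := Set.Ioi 0))
    simpa using this
  refine tendsto_nhds_unique (T1.congr' ?_) T2
  filter_upwards [self_mem_nhdsWithin] with ε hε
  have hε : 0 < ε := hε
  rw [abs_of_pos hε]
  exact taub_A hFm hb hL hk hkc hK l x ε hε

lemma taub_C (hFm : Measurable F) (hb : ∀ u, ‖F u‖ ≤ 2) (hneg : ∀ u < 0, F u = 0)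
    (hG : ContinuousOn G {s | 0 ≤ s.re})
    (hL : ∀ s : ℂ, 0 < s.re → ∫ u in Set.Ioi (0 : ℝ), F u * Complex.exp (-(s * u)) = G s)
    (hk : Continuous k) (hkc : HasCompactSupport k) (hKc : Continuous K) (hKi : Integrable K)
    (hK : ∀ v, K v = ∫ t : ℝ, k t * Complex.exp (((-2 * Real.pi * t * v : ℝ) : ℂ) * Complex.I))
    (l : ℝ) (hl : 0 < l) :
    Tendsto (fun x : ℝ => ∫ v, F (x - l⁻¹ * v) * K v) atTop (𝓝 0) := by
  have h1 := Real.zero_at_infty_fourier (fun t : ℝ => k t * G ((-2 * Real.pi * l * t : ℝ) * Complex.I))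
  have h2 : Tendsto (fun x : ℝ => l * x) atTop (cocompact ℝ) :=
    (tendsto_id.const_mul_atTop hl).mono_right atTop_le_cocompact
  have h3 := (h1.comp h2).const_mul (l : ℂ)
  rw [mul_zero] at h3
  refine h3.congr fun x => ?_
  have e := taub_B hFm hb hG hL hk hkc hKc hKi hK l x hl
  rw [Function.comp_apply, Real.fourier_real_eq_integral_exp_smul]
  have e1 : ∫ u in Set.Ioi (0 : ℝ), F u * K (l * (x - u)) = ∫ u, F u * K (l * (x - u)) := by
    rw [← integral_Ici_eq_integral_Ioi]
    refine setIntegral_eq_integral_of_forall_compl_eq_zero fun u hu => ?_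
    rw [hneg u (by simpa using hu), zero_mul]
  have e2 : ∫ u, F u * K (l * (x - u)) = ∫ u, F (x - u) * K (l * u) := by
    rw [← integral_sub_left_eq_self (fun u => F (x - u) * K (l * u)) volume x]
    simp
  have e3 : ∫ u, F (x - u) * K (l * u) = |l⁻¹| • ∫ v, F (x - l⁻¹ * v) * K v := by
    rw [← Measure.integral_comp_mul_left]
    refine integral_congr_ae (Eventually.of_forall fun u => ?_)
    simp [hl.ne']
  rw [e1, e2, e3, abs_of_pos (inv_pos.mpr hl)] at e
  have e4 : (∫ v : ℝ, Complex.exp (((-2 * Real.pi * v * (l * x) : ℝ) : ℂ) * Complex.I) •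
      (k v * G ((-2 * Real.pi * l * v : ℝ) * Complex.I))) = l⁻¹ • ∫ v, F (x - l⁻¹ * v) * K v := by
    rw [e]
    refine integral_congr_ae (Eventually.of_forall fun u => ?_)
    simp only [smul_eq_mul]
    ring
  rw [e4, Complex.real_smul, Complex.ofReal_inv, mul_inv_cancel_left₀]
  exact_mod_cast hl.ne'
end

theorem taub {F : ℝ → ℂ} {G : ℂ → ℂ} (hFm : Measurable F) (hb : ∀ u, ‖F u‖ ≤ 2)
    (hneg : ∀ u < 0, F u = 0)
    (hosc : ∀ x y, ‖F x - F y‖ ≤ 4 * |x - y| + 3 * Real.exp (-x))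
    (hG : ContinuousOn G {s | 0 ≤ s.re})
    (hL : ∀ s : ℂ, 0 < s.re → ∫ u in Set.Ioi (0 : ℝ), F u * Complex.exp (-(s * u)) = G s) :
    Tendsto F atTop (𝓝 0) := by
  obtain ⟨k, K, hk, hkc, hKc, hKi, hKi1, hK, hK1⟩ := kernel_exists
  set A := ∫ v, |v| * ‖K v‖ with hA
  set B := ∫ v, ‖K v‖ with hB
  have hA0 : 0 ≤ A := integral_nonneg fun v => by positivity
  have hB0 : 0 ≤ B := integral_nonneg fun v => by positivity
  have key : ∀ l : ℝ, 0 < l → ∀ x, ‖F x - ∫ v, F (x - l⁻¹ * v) * K v‖ ≤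
      4 * l⁻¹ * A + 3 * Real.exp (-x) * B := by
    intro l hl x
    have i1 : Integrable (fun v => F x * K v) := hKi.const_mul _
    have i2 : Integrable (fun v => F (x - l⁻¹ * v) * K v) :=
      hKi.bdd_mul (c := 2) (hFm.comp (by fun_prop)).aestronglyMeasurable
        (Eventually.of_forall fun v => hb _)
    have e : F x = ∫ v, F x * K v := by rw [integral_const_mul, hK1, mul_one]
    conv_lhs => rw [e]
    rw [← integral_sub i1 i2, hA, hB, ← integral_const_mul, ← integral_const_mul, ← integral_add
      (hKi1.const_mul _) (hKi.norm.const_mul _)]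
    refine norm_integral_le_of_norm_le ((hKi1.const_mul _).add (hKi.norm.const_mul _))
      (Eventually.of_forall fun v => ?_)
    rw [← sub_mul, norm_mul]
    have := hosc x (x - l⁻¹ * v)
    rw [sub_sub_cancel, abs_mul, abs_of_pos (inv_pos.mpr hl)] at this
    calc _ ≤ (4 * (l⁻¹ * |v|) + 3 * Real.exp (-x)) * ‖K v‖ := by gcongr
      _ = _ := by ring
  rw [Metric.tendsto_atTop']
  simp only [dist_zero_right]
  by_contra! hcon
  obtain ⟨δ, hδ, hcon⟩ := hcon
  obtain ⟨l, hl, hlA⟩ : ∃ l : ℝ, 0 < l ∧ 4 * l⁻¹ * A < δ / 3 := by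
    refine ⟨12 * (A + 1) / δ, by positivity, ?_⟩
    rw [inv_div]
    have : 4 * (δ / (12 * (A + 1))) * A = (δ / 3) * (A / (A + 1)) := by field_simp; ring
    rw [this]
    have : A / (A + 1) < 1 := by rw [div_lt_one (by linarith)]; linarith
    nlinarith
  have h1 := taub_C hFm hb hneg hG hL hk hkc hKc hKi hK l hl
  have h2 : ∀ᶠ x : ℝ in atTop, ‖∫ v, F (x - l⁻¹ * v) * K v‖ < δ / 3 := by
    have := h1.norm
    rw [norm_zero] at this
    exact this.eventually_lt_const (by linarith)
  have h3 : ∀ᶠ x : ℝ in atTop, 3 * Real.exp (-x) * B < δ / 3 := by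
    have : Tendsto (fun x : ℝ => 3 * Real.exp (-x) * B) atTop (𝓝 (3 * 0 * B)) :=
      (Real.tendsto_exp_neg_atTop_nhds_zero.const_mul 3).mul_const B
    exact this.eventually_lt_const (by simp; linarith)
  obtain ⟨N, hN⟩ := eventually_atTop.mp (h2.and h3)
  obtain ⟨n, hn, hn2⟩ := hcon N
  have ⟨a, b⟩ := hN n hn.le
  have c := key l hl n
  have d := norm_le_norm_add_norm_sub' (F n) (∫ v, F (n - l⁻¹ * v) * K v)
  linarith

open scoped ArithmeticFunction.Moebius

noncomputable def mS (N : ℕ) : ℂ := ∑ k ∈ Finset.Icc 1 N, (μ k : ℂ) / k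

lemma mS_norm_le (N : ℕ) : ‖mS N‖ ≤ 2 := by
  rcases Nat.eq_zero_or_pos N with rfl | hN
  · simp [mS]
  have h1 : ∑ n ∈ Ioc 0 N, (μ n : ℂ) * ((N / n : ℕ) : ℂ) = 1 := by
    have h := ArithmeticFunction.sum_Ioc_mul_zeta_eq_sum (R := ℂ) (μ : ArithmeticFunction ℂ) N
    rw [ArithmeticFunction.coe_moebius_mul_coe_zeta] at h
    simp only [ArithmeticFunction.intCoe_apply] at h
    rw [← h, Finset.sum_eq_single 1]
    · simp
    · intro b _ hb; simp [hb]
    · intro h; exfalso; apply h; simp; omega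
  have h2 : (N : ℂ) * mS N = 1 + ∑ n ∈ Ioc 0 N, (μ n : ℂ) * ((N : ℂ) / n - ((N / n : ℕ) : ℂ)) := by
    simp only [mul_sub, Finset.sum_sub_distrib, h1]
    have : Finset.Icc 1 N = Ioc 0 N := by ext; simp; omega
    rw [mS, this, Finset.mul_sum]
    simp only [add_sub_cancel]
    exact Finset.sum_congr rfl fun n _ => by ring
  have h3 : ‖∑ n ∈ Ioc 0 N, (μ n : ℂ) * ((N : ℂ) / n - ((N / n : ℕ) : ℂ))‖ ≤ N := by
    calc _ ≤ ∑ n ∈ Ioc 0 N, (1:ℝ) := by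
          refine norm_sum_le_of_le _ fun n hn => ?_
          · have hn' : 0 < n := (Finset.mem_Ioc.mp hn).1
            rw [norm_mul]
            have ha : ‖(μ n : ℂ)‖ ≤ 1 := by
              rw [Complex.norm_intCast]; exact_mod_cast ArithmeticFunction.abs_moebius_le_one
            have hb : ‖(N : ℂ) / n - ((N / n : ℕ) : ℂ)‖ ≤ 1 := by
              have : (N : ℂ) / n - ((N / n : ℕ) : ℂ) = (((N : ℝ) / n - ((N / n : ℕ) : ℝ) : ℝ) : ℂ) := by
                push_cast; rfl
              rw [this, Complex.norm_real, Real.norm_eq_abs, abs_le, ← Nat.floor_div_eq_div (K := ℝ)]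
              have := Nat.floor_le (a := (N : ℝ) / n) (by positivity)
              have := Nat.lt_floor_add_one ((N : ℝ) / n)
              constructor <;> linarith
            nlinarith [norm_nonneg (μ n : ℂ)]
      _ = N := by simp
  have h4 : (N : ℝ) * ‖mS N‖ ≤ 1 + N := by
    have := congrArg norm h2
    rw [norm_mul, Complex.norm_natCast] at this
    rw [this]
    exact (norm_add_le _ _).trans (by simpa using h3)
  have h5 : (1 : ℝ) ≤ N := by exact_mod_cast hN
  by_contra h
  push Not at h
  nlinarith

lemma mS_osc_aux {a b : ℝ} (hab : a ≤ b) :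
    ‖mS ⌊Real.exp b⌋₊ - mS ⌊Real.exp a⌋₊‖ ≤ Real.exp (b - a) - 1 + Real.exp (-a) := by
  have hle : ⌊Real.exp a⌋₊ ≤ ⌊Real.exp b⌋₊ := Nat.floor_mono (Real.exp_le_exp.mpr hab)
  have h1 : mS ⌊Real.exp b⌋₊ - mS ⌊Real.exp a⌋₊ =
      ∑ k ∈ Finset.Ioc ⌊Real.exp a⌋₊ ⌊Real.exp b⌋₊, (μ k : ℂ) / k := by
    have e (N : ℕ) : Finset.Icc 1 N = Ioc 0 N := by ext; simp; omega
    simp only [mS, e]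
    rw [← Finset.sum_Ioc_consecutive _ (Nat.zero_le _) hle]
    ring
  rw [h1]
  calc _ ≤ ∑ k ∈ Finset.Ioc ⌊Real.exp a⌋₊ ⌊Real.exp b⌋₊, Real.exp (-a) := by
        refine norm_sum_le_of_le _ fun n hn => ?_
        have hn' : Real.exp a < n := Nat.lt_of_floor_lt (Finset.mem_Ioc.mp hn).1
        have ha : ‖(μ n : ℂ)‖ ≤ 1 := by
          rw [Complex.norm_intCast]; exact_mod_cast ArithmeticFunction.abs_moebius_le_one
        rw [norm_div, Complex.norm_natCast, Real.exp_neg, ← one_div]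
        have := Real.exp_pos a
        gcongr
    _ = ((⌊Real.exp b⌋₊ : ℝ) - ⌊Real.exp a⌋₊) * Real.exp (-a) := by
        simp [Nat.cast_sub hle]
    _ ≤ (Real.exp b - Real.exp a + 1) * Real.exp (-a) := by
        have := Nat.floor_le (Real.exp_pos b).le
        have := Nat.lt_floor_add_one (Real.exp a)
        gcongr
        linarith
    _ = _ := by
        rw [add_mul, sub_mul, ← Real.exp_add, ← Real.exp_add]; simp [sub_eq_add_neg]

noncomputable def mF (u : ℝ) : ℂ := mS ⌊Real.exp u⌋₊

lemma mF_bound (u : ℝ) : ‖mF u‖ ≤ 2 := mS_norm_le _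

lemma mF_osc (x y : ℝ) : ‖mF x - mF y‖ ≤ 4 * |x - y| + 3 * Real.exp (-x) := by
  have hx := Real.exp_pos (-x)
  rcases le_total 1 |x - y| with h | h
  · have := norm_sub_le (mF x) (mF y)
    linarith [mF_bound x, mF_bound y]
  have key : ∀ d : ℝ, 0 ≤ d → d ≤ 1 → Real.exp d - 1 ≤ 2 * d := by
    intro d h0 h1
    have := Real.abs_exp_sub_one_le (x := d) (by rwa [abs_of_nonneg h0])
    rw [abs_of_nonneg h0] at this
    exact (le_abs_self _).trans this
  rcases le_total x y with hxy | hxy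
  · have h1 := mS_osc_aux hxy
    rw [norm_sub_rev]
    rw [abs_sub_comm, abs_of_nonneg (by linarith)] at h ⊢
    have := key (y - x) (by linarith) h
    change ‖mS _ - mS _‖ ≤ _
    linarith
  · have h1 := mS_osc_aux hxy
    rw [abs_of_nonneg (by linarith)] at h ⊢
    have := key (x - y) (by linarith) h
    have h3 : Real.exp (-y) ≤ 3 * Real.exp (-x) := by
      have : Real.exp (-y) = Real.exp (x - y) * Real.exp (-x) := by rw [← Real.exp_add]; ring_nf
      rw [this]
      gcongr
      have := key (x - y) (by linarith) h
      linarith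
    change ‖mS _ - mS _‖ ≤ _
    linarith

lemma mF_neg {u : ℝ} (hu : u < 0) : mF u = 0 := by
  have : ⌊Real.exp u⌋₊ = 0 := Nat.floor_eq_zero.mpr (by simpa using hu)
  simp [mF, this, mS]

lemma mF_meas : Measurable mF := by
  unfold mF
  exact (measurable_from_nat (f := mS)).comp (Nat.measurable_floor.comp Real.measurable_exp)

noncomputable def zH : ℂ → ℂ := Function.update (fun s => s * riemannZeta (1 + s)) 0 1

lemma zH_cont : Continuous zH := by
  rw [continuous_iff_continuousAt]
  intro s
  rcases eq_or_ne s 0 with rfl | hs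
  · unfold zH
    rw [continuousAt_update_same]
    have h := riemannZeta_residue_one
    have h2 : Tendsto (fun s : ℂ => 1 + s) (𝓝[≠] 0) (𝓝[≠] 1) := by
      refine tendsto_nhdsWithin_iff.mpr ⟨?_, ?_⟩
      · refine Tendsto.mono_left ?_ nhdsWithin_le_nhds
        have : Continuous (fun s : ℂ => 1 + s) := by fun_prop
        simpa using this.tendsto 0
      · filter_upwards [self_mem_nhdsWithin] with s hs
        simpa using hs
    simpa [Function.comp_def] using h.comp h2
  · unfold zH
    rw [continuousAt_update_of_ne hs]
    have : ContinuousAt riemannZeta (1 + s) :=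
      (differentiableAt_riemannZeta (by simpa using hs)).continuousAt
    exact continuousAt_id.mul (ContinuousAt.comp (f := fun s : ℂ => 1 + s) this (by fun_prop))

lemma zH_ne {s : ℂ} (hs : 0 ≤ s.re) : zH s ≠ 0 := by
  unfold zH
  rcases eq_or_ne s 0 with rfl | h
  · simp
  · rw [Function.update_of_ne h]
    exact mul_ne_zero h (riemannZeta_ne_zero_of_one_le_re (by simpa using hs))

lemma mF_laplace {s : ℂ} (hs : 0 < s.re) :
    ∫ u in Set.Ioi (0 : ℝ), mF u * Complex.exp (-(s * u)) = (zH s)⁻¹ := by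
  have hs0 : s ≠ 0 := by rintro rfl; simp at hs
  set f : ℕ → ℂ := fun n => (μ n : ℂ) / n with hf
  have hterm : ∀ n, LSeries.term f s n = LSeries.term (fun n => (μ n : ℂ)) (1 + s) n := by
    intro n
    rcases eq_or_ne n 0 with rfl | hn
    · simp
    · have hn' : (n : ℂ) ≠ 0 := by exact_mod_cast hn
      rw [LSeries.term_of_ne_zero hn, LSeries.term_of_ne_zero hn, Complex.cpow_add _ _ hn',
        Complex.cpow_one, hf, div_div]
  have hsum : LSeriesSummable f s := by
    have : LSeriesSummable (fun n => (μ n : ℂ)) (1 + s) :=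
      ArithmeticFunction.LSeriesSummable_moebius_iff.mpr (by simpa using hs)
    unfold LSeriesSummable at *
    rwa [funext hterm]
  have hL : LSeries f s * riemannZeta (1 + s) = 1 := by
    have h1 : 1 < (1 + s).re := by simpa using hs
    have := ArithmeticFunction.LSeries_zeta_mul_Lseries_moebius h1
    rw [ArithmeticFunction.LSeries_zeta_eq_riemannZeta h1] at this
    have h2 : LSeries f s = LSeries (fun n => (μ n : ℂ)) (1 + s) := by
      unfold LSeries
      rw [funext hterm]
    rw [mul_comm, h2, this]
  have hI := LSeries_eq_mul_integral f le_rfl hs hsum (by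
    simp only [Real.rpow_zero]
    refine Asymptotics.IsBigO.of_bound 2 (Eventually.of_forall fun n => ?_)
    simpa [mS, hf] using mS_norm_le n)
  have hcv : ∫ t in Set.Ioi (1 : ℝ), (∑ k ∈ Finset.Icc 1 ⌊t⌋₊, f k) * (t : ℂ) ^ (-(s + 1)) =
      ∫ u in Set.Ioi (0 : ℝ), mF u * Complex.exp (-(s * u)) := by
    have him : Real.exp '' Set.Ioi 0 = Set.Ioi 1 := by
      ext y
      constructor
      · rintro ⟨x, hx, rfl⟩; simpa using hx
      · intro hy
        have hy : 1 < y := hy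
        exact ⟨Real.log y, Real.log_pos hy, Real.exp_log (by linarith)⟩
    rw [← him, integral_image_eq_integral_abs_deriv_smul measurableSet_Ioi
      (fun x _ => (Real.hasDerivAt_exp x).hasDerivWithinAt) Real.exp_injective.injOn]
    refine setIntegral_congr_fun measurableSet_Ioi fun u _ => ?_
    have : ((Real.exp u : ℝ) : ℂ) ^ (-(s + 1)) = Complex.exp (-(s * u)) * Complex.exp (-u) := by
      rw [Complex.ofReal_exp, ← Complex.exp_add, Complex.cpow_def_of_ne_zero (Complex.exp_ne_zero _),
        ← Complex.ofReal_exp, ← Complex.ofReal_log (Real.exp_pos u).le, Real.log_exp]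
      ring_nf
    simp only [abs_of_pos (Real.exp_pos u), Complex.real_smul]
    rw [this, Complex.ofReal_exp]
    have e : Complex.exp u * Complex.exp (-u) = 1 := by rw [← Complex.exp_add]; simp
    change Complex.exp u * (mF u * _) = _
    linear_combination (mF u * Complex.exp (-(s * u))) * e
  rw [hcv] at hI
  rw [hI] at hL
  unfold zH
  rw [Function.update_of_ne hs0]
  refine eq_inv_of_mul_eq_one_left ?_
  linear_combination hL

end Aux

theorem stmt10 :
    IsMO (fun n : ℕ => (ArithmeticFunction.moebius n : ℂ) / n) ∧
    ∀ p : ℕ, p.Prime →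
      SeriesTendsTo (fun k => (ArithmeticFunction.moebius (p ^ k) : ℂ) / ((p ^ k : ℕ) : ℂ))
        (1 - 1 / (p : ℂ)) ∧ (1 - 1 / (p : ℂ)) ≠ 0 := by
  have hcast : ∀ p : ℕ, p.Prime → (1 - 1 / (p : ℂ)) ≠ 0 := by
    intro p hp h
    have hp0 : (p : ℂ) ≠ 0 := by exact_mod_cast hp.ne_zero
    field_simp at h
    have : (p : ℂ) = 1 := by linear_combination h
    exact hp.one_lt.ne' (by exact_mod_cast this)
  have hser : ∀ p : ℕ, p.Prime →
      SeriesTendsTo (fun k => (ArithmeticFunction.moebius (p ^ k) : ℂ) / ((p ^ k : ℕ) : ℂ))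
        (1 - 1 / (p : ℂ)) := by
    intro p hp
    refine tendsto_const_nhds.congr' ?_
    filter_upwards [eventually_ge_atTop 2] with N hN
    obtain ⟨m, rfl⟩ := Nat.exists_eq_add_of_le' hN
    rw [Finset.sum_range_succ', Finset.sum_range_succ', Finset.sum_eq_zero]
    · simp [ArithmeticFunction.moebius_apply_prime hp]
      ring
    · intro k _
      rw [ArithmeticFunction.moebius_apply_prime_pow hp (by omega)]
      simp
  refine ⟨⟨⟨by simp, ?_⟩, ?_, fun p hp => ⟨_, hcast p hp, hser p hp⟩⟩,
    fun p hp => ⟨hser p hp, hcast p hp⟩⟩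
  · intro m n hmn
    simp only [ArithmeticFunction.isMultiplicative_moebius.map_mul_of_coprime hmn]
    push_cast
    rw [mul_div_mul_comm]
  · have hF : Tendsto mF atTop (nhds 0) :=
      taub mF_meas mF_bound (fun u hu => mF_neg hu) mF_osc
        (zH_cont.continuousOn.inv₀ fun s hs => zH_ne hs) (fun s hs => mF_laplace hs)
    have hlog : Tendsto (fun N : ℕ => Real.log (N : ℝ)) atTop atTop :=
      Real.tendsto_log_atTop.comp tendsto_natCast_atTop_atTop
    refine (hF.comp hlog).congr' ?_
    filter_upwards [eventually_ge_atTop 1] with N hN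
    have hN' : (0 : ℝ) < N := by exact_mod_cast hN
    rw [Function.comp_apply, mF, Real.exp_log hN', Nat.floor_natCast, mS,
      Finset.range_eq_Ico, Finset.sum_Ico_add' (fun n : ℕ => (ArithmeticFunction.moebius n : ℂ) / n)]
    rfl
end

section
/- Let α be a complex number with Re α > 0 and α ≠ 1. Then the series ∑_{n=1}^∞ (−1)^{n−1}/n^α converges and its sum equals (1 − 2^{1−α}) ζ(α), where ζ is the Riemann zeta function. -/
open Filter Finset

/-- The paired term of the alternating series. -/
noncomputable def pairT (m : ℕ) (s : ℂ) : ℂ :=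
  1 / (((2 * m : ℕ) : ℂ) + 1) ^ s - 1 / (((2 * m + 1 : ℕ) : ℂ) + 1) ^ s

lemma pairT_bound (m : ℕ) (s : ℂ) (hs : 0 < s.re) :
    ‖pairT m s‖ ≤ ‖s‖ * ((m : ℝ) + 1) ^ (-s.re - 1) := by
  have hs0 : s ≠ 0 := by rintro rfl; simp at hs
  have hpos : (0 : ℝ) < 2 * m + 1 := by positivity
  have key := (convex_Icc (2 * (m : ℝ) + 1) (2 * m + 2)).norm_image_sub_le_of_norm_hasDerivWithin_le
    (f := fun t : ℝ => (t : ℂ) ^ (-s)) (f' := fun t : ℝ => -s * (t : ℂ) ^ (-s - 1))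
    (C := ‖s‖ * ((m : ℝ) + 1) ^ (-s.re - 1))
    (x := 2 * (m : ℝ) + 2) (y := 2 * (m : ℝ) + 1) ?_ ?_ (by simp) (by simp)
  · have e : pairT m s = (((2 * (m : ℝ) + 1 : ℝ)) : ℂ) ^ (-s) - ((2 * (m : ℝ) + 2 : ℝ) : ℂ) ^ (-s) := by
      simp only [pairT, Complex.cpow_neg, one_div]
      push_cast
      congr 3
      ring
    rw [e]
    refine key.trans (le_of_eq ?_)
    norm_num
  · intro t ht
    have ht0 : 0 < t := hpos.trans_le ht.1
    exact (HasDerivAt.hasDerivWithinAt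
      (hasDerivAt_ofReal_cpow_const ht0.ne' (neg_ne_zero.mpr hs0)))
  · intro t ht
    have ht0 : 0 < t := hpos.trans_le ht.1
    rw [norm_mul, norm_neg, Complex.norm_cpow_eq_rpow_re_of_pos ht0]
    gcongr 
    simp only [Complex.sub_re, Complex.neg_re, Complex.one_re]
    apply Real.rpow_le_rpow_of_nonpos (by positivity) _ (by linarith)
    have := ht.1
    have : (0 : ℝ) ≤ m := by positivity
    linarith

lemma summable_aux (σ : ℝ) (hσ : 0 < σ) (R : ℝ) :
    Summable (fun m : ℕ => R * ((m : ℝ) + 1) ^ (-σ - 1)) := by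
  apply Summable.mul_left
  have := (summable_nat_add_iff 1).mpr (Real.summable_nat_rpow.mpr (show -σ - 1 < -1 by linarith))
  simpa using this

lemma pairT_summable (s : ℂ) (hs : 0 < s.re) : Summable (fun m => pairT m s) :=
  Summable.of_norm_bounded (summable_aux s.re hs ‖s‖) (fun m => pairT_bound m s hs)

lemma cast_ne (n : ℕ) : (n : ℂ) + 1 ≠ 0 := by exact_mod_cast n.succ_ne_zero

lemma pairT_diff (m : ℕ) : Differentiable ℂ (pairT m) := by
  intro s
  unfold pairT
  have h (n : ℕ) : DifferentiableAt ℂ (fun s : ℂ => 1 / ((n : ℂ) + 1) ^ s) s := by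
    apply DifferentiableAt.div (by fun_prop)
    · exact differentiableAt_id.const_cpow (Or.inl (cast_ne n))
    · simp [Complex.cpow_eq_zero_iff, cast_ne n]
  exact (h _).sub (h _)

lemma F_diff : DifferentiableOn ℂ (fun s => ∑' m, pairT m s) {s : ℂ | 0 < s.re} := by
  intro s hs
  have hs' : 0 < s.re := hs
  set U : Set ℂ := {z : ℂ | s.re / 2 < z.re} ∩ Metric.ball 0 (‖s‖ + 1) with hU
  have hUo : IsOpen U := (isOpen_lt continuous_const Complex.continuous_re).inter Metric.isOpen_ball
  have hsU : s ∈ U := ⟨by simp only [Set.mem_ofPred_eq]; linarith, by simp⟩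
  have := Complex.differentiableOn_tsum_of_summable_norm (F := pairT) (U := U)
    (summable_aux (s.re / 2) (by linarith) (‖s‖ + 1))
    (fun m => (pairT_diff m).differentiableOn) hUo (by
      intro m z hz
      have h1 : s.re / 2 < z.re := hz.1
      have h2 : ‖z‖ < ‖s‖ + 1 := by simpa using hz.2
      refine (pairT_bound m z (by linarith)).trans ?_
      have : (1 : ℝ) ≤ (m : ℝ) + 1 := by simp
      gcongr)
  exact (this.differentiableAt (hUo.mem_nhds hsU)).differentiableWithinAt

lemma F_eq_of_one_lt (s : ℂ) (hs : 1 < s.re) :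
    ∑' m, pairT m s = (1 - (2 : ℂ) ^ (1 - s)) * riemannZeta s := by
  have hz := zeta_eq_tsum_one_div_nat_add_one_cpow hs
  set f : ℕ → ℂ := fun n => 1 / ((n : ℂ) + 1) ^ s with hf
  have hsum : Summable f := by
    have := (summable_nat_add_iff 1).mpr (Complex.summable_one_div_nat_cpow.mpr hs)
    simpa [hf] using this
  have hE : Summable (fun m => f (2 * m)) :=
    hsum.comp_injective (fun a b h => by simpa using h)
  have hO : Summable (fun m => f (2 * m + 1)) :=
    hsum.comp_injective (fun a b h => by simpa using h)
  have hEO := tsum_even_add_odd hE hO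
  have hOz : ∑' m, f (2 * m + 1) = (2 : ℂ) ^ (-s) * riemannZeta s := by
    rw [hz, ← tsum_mul_left]
    congr 1
    funext m
    simp only [hf]
    have : (((2 * m + 1 : ℕ) : ℂ) + 1) = ((2 : ℕ) : ℂ) * ((m + 1 : ℕ) : ℂ) := by push_cast; ring
    rw [this, Complex.natCast_mul_natCast_cpow, Complex.cpow_neg]
    push_cast
    rw [one_div, mul_inv, one_div]
  have hF : ∑' m, pairT m s = ∑' m, f (2 * m) - ∑' m, f (2 * m + 1) := by
    rw [← hE.tsum_sub hO]; rfl
  have h2 : (2 : ℂ) ^ (1 - s) = 2 * (2 : ℂ) ^ (-s) := by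
    rw [sub_eq_add_neg, Complex.cpow_add _ _ two_ne_zero, Complex.cpow_one]
  rw [hF, h2]
  rw [← hz] at hEO
  linear_combination hEO - 2 * hOz

lemma F_eq (s : ℂ) (hs : 0 < s.re) (h1 : s ≠ 1) :
    ∑' m, pairT m s = (1 - (2 : ℂ) ^ (1 - s)) * riemannZeta s := by
  have hUo : IsOpen {s : ℂ | 0 < s.re} := isOpen_lt continuous_const Complex.continuous_re
  have hA : AnalyticOnNhd ℂ (fun s : ℂ => (s - 1) * ∑' m, pairT m s) {s : ℂ | 0 < s.re} :=
    DifferentiableOn.analyticOnNhd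
      (DifferentiableOn.mul (by fun_prop) F_diff) hUo
  have hB : AnalyticOnNhd ℂ (fun s : ℂ => (1 - (2 : ℂ) ^ (1 - s)) * riemannZeta₁ s)
      {s : ℂ | 0 < s.re} := by
    refine DifferentiableOn.analyticOnNhd (Differentiable.differentiableOn ?_) hUo
    refine Differentiable.mul ?_ differentiable_riemannZeta₁
    intro z
    refine (differentiableAt_const _).sub (DifferentiableAt.const_cpow (by fun_prop) (Or.inl two_ne_zero))
  have hpre : IsPreconnected {s : ℂ | 0 < s.re} := (convex_halfSpace_re_gt 0).isPreconnected
  have hev : (fun s : ℂ => (s - 1) * ∑' m, pairT m s) =ᶠ[nhds (2 : ℂ)]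
      (fun s : ℂ => (1 - (2 : ℂ) ^ (1 - s)) * riemannZeta₁ s) := by
    have : {s : ℂ | 1 < s.re} ∈ nhds (2 : ℂ) :=
      (isOpen_lt continuous_const Complex.continuous_re).mem_nhds (by simp)
    filter_upwards [this] with z hz
    have hz' : 1 < z.re := hz
    have hz1 : z ≠ 1 := by rintro rfl; simp at hz'
    have : z - 1 ≠ 0 := sub_ne_zero.mpr hz1
    rw [F_eq_of_one_lt z hz', riemannZeta_eq_inv_sub_mul hz1]
    field_simp
  have := hA.eqOn_of_preconnected_of_eventuallyEq hB hpre (by simp : (2 : ℂ) ∈ _) hev hs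
  have hs1 : s - 1 ≠ 0 := sub_ne_zero.mpr h1
  rw [riemannZeta_eq_inv_sub_mul h1]
  apply mul_left_cancel₀ hs1
  simp only at this
  rw [this]
  field_simp

theorem stmt11 (α : ℂ) (hα : 0 < α.re) (hα1 : α ≠ 1) :
    SeriesTendsTo (fun n => (-1 : ℂ) ^ n / ((n : ℂ) + 1) ^ α)
      ((1 - (2 : ℂ) ^ (1 - α)) * riemannZeta α) := by
  unfold SeriesTendsTo
  set g : ℕ → ℂ := fun n => (-1 : ℂ) ^ n / ((n : ℂ) + 1) ^ α with hg
  have hlim := (pairT_summable α hα).hasSum.tendsto_sum_nat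
  rw [F_eq α hα hα1] at hlim
  set L := (1 - (2 : ℂ) ^ (1 - α)) * riemannZeta α
  have heven (N : ℕ) : ∑ k ∈ range (2 * N), g k = ∑ m ∈ range N, pairT m α := by
    induction N with
    | zero => simp
    | succ N ih =>
      rw [show 2 * (N + 1) = 2 * N + 1 + 1 by ring, sum_range_succ, sum_range_succ, ih,
        sum_range_succ, add_assoc]
      congr 1
      simp only [hg, pairT, pow_succ, pow_mul]
      norm_num
      ring
  have hg0 : Tendsto g atTop (nhds 0) := by
    rw [tendsto_zero_iff_norm_tendsto_zero]
    have h := ((tendsto_rpow_neg_atTop hα).comp tendsto_natCast_atTop_atTop).comp (tendsto_add_atTop_nat 1)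
    refine h.congr (fun n => ?_)
    have : ‖((n : ℂ) + 1) ^ α‖ = ((n : ℝ) + 1) ^ α.re := by
      have := Complex.norm_natCast_cpow_of_pos n.succ_pos α
      simpa using this
    simp only [hg, Function.comp, norm_div, norm_pow, norm_neg, norm_one, one_pow, this]
    rw [Real.rpow_neg (by positivity)]
    simp
  have hE : Tendsto (fun N : ℕ => ∑ k ∈ range (2 * N), g k) atTop (nhds L) := by
    simpa only [heven] using hlim
  have htwo : Tendsto (fun N : ℕ => 2 * N) atTop atTop :=
    tendsto_id.const_mul_atTop' two_pos
  have hO : Tendsto (fun N : ℕ => ∑ k ∈ range (2 * N + 1), g k) atTop (nhds L) := by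
    simp only [sum_range_succ]
    simpa using hE.add (hg0.comp htwo)
  rw [Metric.tendsto_atTop] at hE hO ⊢
  intro ε hε
  obtain ⟨A, hA⟩ := hE ε hε
  obtain ⟨B, hB⟩ := hO ε hε
  refine ⟨2 * (A + B) + 2, fun n hn => ?_⟩
  rcases Nat.even_or_odd' n with ⟨k, rfl | rfl⟩
  · exact hA k (by omega)
  · exact hB k (by omega)
end

section
/- Let α be a complex number with Re α > 0. The function f(n) = (−1)^{n−1}/n^α is an MO function if and only if ζ(α) = 0, where ζ is the Riemann zeta function. -/
open Filter Finset

open Complex in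
lemma etaSum_one_lt {s : ℂ} (hs : 1 < s.re) :
    HasSum (fun n : ℕ => -(-1 : ℂ) ^ n / (n : ℂ) ^ s) ((1 - 2 ^ (1 - s)) * riemannZeta s) := by
  have hs0 : s ≠ 0 := by rintro rfl; norm_num at hs
  have h1 : HasSum (fun n : ℕ => 1 / (n : ℂ) ^ s) (riemannZeta s) := by
    rw [zeta_eq_tsum_one_div_nat_cpow hs]
    exact (Complex.summable_one_div_nat_cpow.mpr hs).hasSum
  have h2 : HasSum (fun n : ℕ => if Even n then 1 / (n : ℂ) ^ s else 0)
      (2 ^ (-s) * riemannZeta s) := by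
    have hinj : Function.Injective (fun n : ℕ => 2 * n) := fun a b h => by simpa using h
    rw [← hinj.hasSum_iff]
    · have := h1.mul_left (2 ^ (-s))
      refine this.congr_fun ?_
      intro n
      have : ((2 * n : ℕ) : ℂ) ^ s = (2 : ℂ) ^ s * (n : ℂ) ^ s := by
        have := Complex.natCast_mul_natCast_cpow 2 n s
        push_cast at this ⊢
        exact this
      simp only [Function.comp, even_two_mul, if_true]
      rw [this, Complex.cpow_neg]
      field_simp
    · intro n hn
      rw [if_neg]
      rintro ⟨k, rfl⟩
      exact hn ⟨k, by simp; ring⟩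
  have h3 := h1.sub (h2.mul_left 2)
  have e : riemannZeta s - 2 * (2 ^ (-s) * riemannZeta s)
      = (1 - 2 ^ (1 - s)) * riemannZeta s := by
    rw [show (1 - s) = 1 + -s by ring, Complex.cpow_add _ _ two_ne_zero, Complex.cpow_one]
    ring
  rw [e] at h3
  refine h3.congr_fun ?_
  intro n
  by_cases hn : Even n
  · simp [hn]; ring
  · simp [hn, (Nat.not_even_iff_odd.mp hn).neg_one_pow]

open Complex in
lemma etaE_eq {s : ℂ} (hs : s ≠ 1) :
    -HurwitzZeta.expZeta ((1 / 2 : ℝ) : UnitAddCircle) s = (1 - 2 ^ (1 - s)) * riemannZeta s := by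
  have hpc : IsPreconnected ({1}ᶜ : Set ℂ) :=
    (isConnected_compl_singleton_of_one_lt_rank (by simp) _).isPreconnected
  have hne : (2 : ℂ) ∈ ({1}ᶜ : Set ℂ) := by simp
  refine AnalyticOnNhd.eqOn_of_preconnected_of_eventuallyEq (𝕜 := ℂ)
    (f := fun s => -HurwitzZeta.expZeta ((1 / 2 : ℝ) : UnitAddCircle) s)
    (g := fun s => (1 - 2 ^ (1 - s)) * riemannZeta s) ?_ ?_ hpc hne ?_ hs
  · refine DifferentiableOn.analyticOnNhd (fun s hs ↦ ?_) isOpen_compl_singleton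
    exact (HurwitzZeta.differentiableAt_expZeta _ _ (.inl hs)).neg.differentiableWithinAt
  · refine DifferentiableOn.analyticOnNhd (fun s hs ↦ ?_) isOpen_compl_singleton
    refine (DifferentiableAt.mul ?_ (differentiableAt_riemannZeta hs)).differentiableWithinAt
    refine DifferentiableAt.sub (by fun_prop) ?_
    exact DifferentiableAt.const_cpow (by fun_prop) (.inl two_ne_zero)
  · filter_upwards [(isOpen_lt continuous_const continuous_re).mem_nhds
      (show (1 : ℝ) < (2 : ℂ).re by norm_num)] with z hz
    have h := (HurwitzZeta.hasSum_expZeta_of_one_lt_re (1 / 2) hz).neg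
    refine h.unique ((etaSum_one_lt hz).congr_fun ?_)
    intro n
    have : cexp (2 * Real.pi * I * ((1 / 2 : ℝ) : ℂ) * n) = (-1) ^ n := by
      rw [← Complex.exp_pi_mul_I, ← Complex.exp_nat_mul]
      congr 1
      push_cast
      ring
    rw [this, neg_div]

/-- paired terms -/
noncomputable def etaPair (k : ℕ) (s : ℂ) : ℂ :=
  ((2 * k + 1 : ℝ) : ℂ) ^ (-s) - ((2 * k + 2 : ℝ) : ℂ) ^ (-s)

open Complex in
lemma etaPair_bound (k : ℕ) {s : ℂ} (hs : 0 < s.re) :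
    ‖etaPair k s‖ ≤ ‖s‖ * (2 * k + 1 : ℝ) ^ (-s.re - 1) := by
  have hk : (0 : ℝ) < 2 * k + 1 := by positivity
  have hd : ∀ x ∈ Set.Icc (2 * k + 1 : ℝ) (2 * k + 2),
      HasDerivWithinAt (fun x : ℝ => (x : ℂ) ^ (-s)) (-s * (x : ℂ) ^ (-s - 1))
        (Set.Icc (2 * k + 1 : ℝ) (2 * k + 2)) x := by
    intro x hx
    have hx0 : 0 < x := hk.trans_le hx.1
    have h := (hasDerivAt_id (x : ℂ)).cpow_const (c := -s) (.inl (by simpa using hx0))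
    have h2 := h.comp_ofReal
    simpa using h2.hasDerivWithinAt
  have hb : ∀ x ∈ Set.Icc (2 * k + 1 : ℝ) (2 * k + 2),
      ‖-s * (x : ℂ) ^ (-s - 1)‖ ≤ ‖s‖ * (2 * k + 1 : ℝ) ^ (-s.re - 1) := by
    intro x hx
    have hx0 : 0 < x := hk.trans_le hx.1
    rw [norm_mul, norm_neg, Complex.norm_cpow_eq_rpow_re_of_pos hx0]
    gcongr ‖s‖ * ?_
    simp only [sub_re, neg_re, one_re]
    exact Real.rpow_le_rpow_of_nonpos hk hx.1 (by linarith)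
  have := Convex.norm_image_sub_le_of_norm_hasDerivWithin_le hd hb (convex_Icc _ _)
    (𝕜 := ℝ) (x := (2 * k + 2 : ℝ)) (y := (2 * k + 1 : ℝ)) (by constructor <;> linarith) (by constructor <;> linarith)
  have e : ‖(2 * k + 1 : ℝ) - (2 * k + 2)‖ = 1 := by norm_num
  rw [e, mul_one] at this
  exact this

lemma etaBound_summable {δ : ℝ} (hδ : 0 < δ) (R : ℝ) :
    Summable (fun k : ℕ => R * (2 * k + 1 : ℝ) ^ (-δ - 1)) := by
  apply Summable.mul_left
  have h : Summable (fun k : ℕ => ((k : ℝ)) ^ (-δ - 1)) :=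
    Real.summable_nat_rpow.mpr (by linarith)
  have h2 := h.comp_injective (i := fun k : ℕ => 2 * k + 1) (fun a b h => by simpa using h)
  refine h2.congr ?_
  intro k
  simp

open Complex in
lemma etaPair_diff : DifferentiableOn ℂ (fun s => ∑' k, etaPair k s) {s : ℂ | 0 < s.re} := by
  intro s hs
  have hs : 0 < s.re := hs
  set U : Set ℂ := {z | s.re / 2 < z.re} ∩ Metric.ball 0 (‖s‖ + 1)
  have hU : IsOpen U := (isOpen_lt continuous_const continuous_re).inter Metric.isOpen_ball
  have hsU : s ∈ U := ⟨by simp only [Set.mem_ofPred_eq]; linarith, by simp⟩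
  have : DifferentiableOn ℂ (fun s => ∑' k, etaPair k s) U := by
    refine differentiableOn_tsum_of_summable_norm
      (etaBound_summable (half_pos hs) (‖s‖ + 1)) ?_ hU ?_
    · intro k z hz
      have h1 : ((2 * k + 1 : ℝ) : ℂ) ≠ 0 := by
        rw [Complex.ofReal_ne_zero]; positivity
      have h2 : ((2 * k + 2 : ℝ) : ℂ) ≠ 0 := by
        rw [Complex.ofReal_ne_zero]; positivity
      exact ((differentiableAt_id.neg.const_cpow (.inl h1)).sub
        (differentiableAt_id.neg.const_cpow (.inl h2))).differentiableWithinAt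
    · intro k z hz
      have h1 : s.re / 2 < z.re := hz.1
      have h2 : ‖z‖ < ‖s‖ + 1 := by simpa using hz.2
      refine (etaPair_bound k (by linarith)).trans ?_
      have : (1 : ℝ) ≤ 2 * k + 1 := by linarith [(Nat.cast_nonneg k : (0 : ℝ) ≤ k)]
      gcongr
  exact (this.differentiableAt (hU.mem_nhds hsU)).differentiableWithinAt

lemma etaPair_summable {s : ℂ} (hs : 0 < s.re) : Summable (fun k => etaPair k s) :=
  Summable.of_norm_bounded (etaBound_summable hs ‖s‖) (fun k => etaPair_bound k hs)

lemma eta_partial (s : ℂ) (N : ℕ) :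
    ∑ k ∈ Finset.range (2 * N), (-1 : ℂ) ^ k / ((k + 1 : ℕ) : ℂ) ^ s
      = ∑ k ∈ Finset.range N, etaPair k s := by
  induction N with
  | zero => simp
  | succ N ih =>
    rw [show 2 * (N + 1) = 2 * N + 1 + 1 by ring, Finset.sum_range_succ, Finset.sum_range_succ,
      ih, Finset.sum_range_succ, etaPair, Complex.cpow_neg, Complex.cpow_neg]
    rw [pow_succ, (even_two_mul N).neg_one_pow]
    push_cast
    rw [show (2 * (N : ℂ) + 1 + 1) = 2 * N + 2 by ring]
    ring

open Complex in
lemma etaPair_tsum {s : ℂ} (hs : 0 < s.re) :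
    ∑' k, etaPair k s = -HurwitzZeta.expZeta ((1 / 2 : ℝ) : UnitAddCircle) s := by
  have hopen : IsOpen {s : ℂ | 0 < s.re} := isOpen_lt continuous_const continuous_re
  have hpc : IsPreconnected {s : ℂ | 0 < s.re} := (convex_halfSpace_re_gt 0).isPreconnected
  have hne : (2 : ℂ) ∈ {s : ℂ | 0 < s.re} := by simp
  refine AnalyticOnNhd.eqOn_of_preconnected_of_eventuallyEq (𝕜 := ℂ)
    (f := fun s => ∑' k, etaPair k s)
    (g := fun s => -HurwitzZeta.expZeta ((1 / 2 : ℝ) : UnitAddCircle) s) ?_ ?_ hpc hne ?_ hs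
  · exact etaPair_diff.analyticOnNhd hopen
  · refine DifferentiableOn.analyticOnNhd (fun s hs ↦ ?_) hopen
    refine (HurwitzZeta.differentiableAt_expZeta _ _ (.inr ?_)).neg.differentiableWithinAt
    intro h
    rw [AddCircle.coe_eq_zero_iff] at h
    obtain ⟨n, hn⟩ := h
    have h2 : (2 * n : ℝ) = 1 := by
      simp at hn
      linarith
    have h3 : 2 * n = 1 := by exact_mod_cast h2
    omega
  · filter_upwards [(isOpen_lt continuous_const continuous_re).mem_nhds
      (show (1 : ℝ) < (2 : ℂ).re by norm_num)] with z hz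
    have hz : 1 < z.re := hz
    have hz1 : z ≠ 1 := by rintro rfl; norm_num at hz
    have hz0 : z ≠ 0 := by rintro rfl; norm_num at hz
    rw [etaE_eq hz1]
    have h := (etaSum_one_lt hz)
    rw [← hasSum_nat_add_iff' 1] at h
    have h := h.tendsto_sum_nat.comp (Filter.tendsto_id.const_mul_atTop' (show 0 < 2 by norm_num))
    have h' := (etaPair_summable (show 0 < z.re by linarith)).hasSum.tendsto_sum_nat
    refine tendsto_nhds_unique h' ?_
    have e : (1 - 2 ^ (1 - z)) * riemannZeta z - ∑ i ∈ Finset.range 1, -(-1 : ℂ) ^ i / (i : ℂ) ^ z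
      = (1 - 2 ^ (1 - z)) * riemannZeta z := by simp [hz0]
    rw [e] at h
    refine h.congr ?_
    intro N
    rw [← eta_partial]
    refine Finset.sum_congr rfl fun k _ => ?_
    rw [pow_succ]
    simp

lemma eta_tendsto {s : ℂ} (hs : 0 < s.re) (hs1 : s ≠ 1) :
    Filter.Tendsto (fun N => ∑ k ∈ Finset.range N, (-1 : ℂ) ^ k / ((k + 1 : ℕ) : ℂ) ^ s)
      Filter.atTop (nhds ((1 - 2 ^ (1 - s)) * riemannZeta s)) := by
  rw [← etaE_eq hs1, ← etaPair_tsum hs]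
  set S := ∑' k, etaPair k s
  have h := (etaPair_summable hs).hasSum.tendsto_sum_nat
  have hdiv : Filter.Tendsto (fun N : ℕ => N / 2) Filter.atTop Filter.atTop :=
    Nat.tendsto_div_const_atTop (by norm_num)
  have h1 := h.comp hdiv
  have h2 : Filter.Tendsto (fun N => ∑ k ∈ Finset.range N, (-1 : ℂ) ^ k / ((k + 1 : ℕ) : ℂ) ^ s
      - ∑ k ∈ Finset.range (N / 2), etaPair k s) Filter.atTop (nhds 0) := by
    have hz : Filter.Tendsto (fun N : ℕ => (N : ℝ) ^ (-s.re)) Filter.atTop (nhds 0) :=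
      (tendsto_rpow_neg_atTop hs).comp tendsto_natCast_atTop_atTop
    refine squeeze_zero_norm (fun N => ?_) hz
    rw [← eta_partial]
    rcases Nat.even_or_odd' N with ⟨m, rfl | rfl⟩
    · rw [show 2 * m / 2 = m by omega, sub_self, norm_zero]
      positivity
    · rw [show (2 * m + 1) / 2 = m by omega, Finset.sum_range_succ, add_sub_cancel_left,
        norm_div, norm_pow, norm_neg, norm_one, one_pow, Complex.norm_natCast_cpow_of_pos (by omega),
        Real.rpow_neg (by positivity), one_div]
  have h3 := h2.add h1
  rw [zero_add] at h3
  refine h3.congr fun N => ?_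
  simp

lemma pow_norm_lt {α : ℂ} (hα : 0 < α.re) {p : ℕ} (hp : p.Prime) : ‖((p : ℂ) ^ (-α))‖ < 1 := by
  rw [Complex.norm_natCast_cpow_of_pos hp.pos]
  exact Real.rpow_lt_one_of_one_lt_of_neg (by exact_mod_cast hp.one_lt) (by simpa using hα)

lemma pow_cpow_inv (α : ℂ) (p k : ℕ) :
    (((p ^ k : ℕ) : ℂ) ^ α)⁻¹ = ((p : ℂ) ^ (-α)) ^ k := by
  rw [Complex.cpow_neg, inv_pow]
  congr 1
  induction k with
  | zero => simp
  | succ k ih =>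
    rw [pow_succ, pow_succ, ← ih, Nat.cast_mul, Complex.natCast_mul_natCast_cpow]

lemma eta_mult {α : ℂ} (hα : 0 < α.re) :
    IsMultFn (fun n : ℕ => (-1 : ℂ) ^ (n - 1) / (n : ℂ) ^ α) := by
  have hα0 : α ≠ 0 := by rintro rfl; simp at hα
  refine ⟨by simp, ?_⟩
  intro m n hmn
  rcases Nat.eq_zero_or_pos m with rfl | hm
  · simp [hα0]
  rcases Nat.eq_zero_or_pos n with rfl | hn
  · simp [hα0]
  simp only
  rw [Nat.cast_mul, Complex.natCast_mul_natCast_cpow, div_mul_div_comm, ← pow_add]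
  congr 1
  obtain ⟨a, rfl⟩ : ∃ a, m = a + 1 := ⟨m - 1, by omega⟩
  obtain ⟨b, rfl⟩ : ∃ b, n = b + 1 := ⟨n - 1, by omega⟩
  have e : (a + 1) * (b + 1) - 1 = a * b + (a + b) := by
    rw [show (a + 1) * (b + 1) = a * b + (a + b) + 1 by ring]; rfl
  have hab : Even (a * b) := by
    by_contra h
    rw [Nat.not_even_iff_odd, Nat.odd_mul] at h
    have h1 : 2 ∣ a + 1 := by obtain ⟨⟨c, hc⟩, _⟩ := h; omega
    have h2 : 2 ∣ b + 1 := by obtain ⟨_, ⟨c, hc⟩⟩ := h; omega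
    exact Nat.not_coprime_of_dvd_of_dvd (by norm_num) h1 h2 hmn
  rw [e, pow_add, hab.neg_one_pow, one_mul]
  rfl

lemma two_tendsto {α : ℂ} (hα : 0 < α.re) :
    SeriesTendsTo (fun k => (-1 : ℂ) ^ (2 ^ k - 1) / ((2 ^ k : ℕ) : ℂ) ^ α)
      (2 - (1 - (2 : ℂ) ^ (-α))⁻¹) := by
  have hx : ‖(2 : ℂ) ^ (-α)‖ < 1 := by exact_mod_cast pow_norm_lt hα Nat.prime_two
  have h := ((hasSum_ite_eq 0 (2 : ℂ)).sub (hasSum_geometric_of_norm_lt_one hx)).tendsto_sum_nat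
  refine h.congr fun N => Finset.sum_congr rfl fun k _ => ?_
  beta_reduce
  rw [div_eq_mul_inv, pow_cpow_inv]
  rcases Nat.eq_zero_or_pos k with rfl | hk
  · simp; norm_num
  · have : Odd (2 ^ k - 1) :=
      Nat.Even.sub_odd Nat.one_le_two_pow ((even_two).pow_of_ne_zero (by omega)) odd_one
    rw [this.neg_one_pow, if_neg (by omega)]
    simp

lemma odd_tendsto {α : ℂ} (hα : 0 < α.re) {p : ℕ} (hp : p.Prime) (h2 : p ≠ 2) :
    SeriesTendsTo (fun k => (-1 : ℂ) ^ (p ^ k - 1) / ((p ^ k : ℕ) : ℂ) ^ α)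
      (1 - (p : ℂ) ^ (-α))⁻¹ := by
  have h := (hasSum_geometric_of_norm_lt_one (pow_norm_lt hα hp)).tendsto_sum_nat
  refine h.congr fun N => Finset.sum_congr rfl fun k _ => ?_
  beta_reduce
  rw [div_eq_mul_inv, pow_cpow_inv]
  have : Even (p ^ k - 1) := Nat.Odd.sub_odd ((hp.odd_of_ne_two h2).pow) odd_one
  rw [this.neg_one_pow, one_mul]

lemma one_sub_ne {x : ℂ} (hx : ‖x‖ < 1) : 1 - x ≠ 0 := by
  intro h
  have : x = 1 := (sub_eq_zero.mp h).symm
  rw [this] at hx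
  simp at hx

lemma two_ne_iff {α : ℂ} (hα : 0 < α.re) :
    (2 - (1 - (2 : ℂ) ^ (-α))⁻¹) = 0 ↔ (1 - (2 : ℂ) ^ (1 - α)) = 0 := by
  have hx : ‖(2 : ℂ) ^ (-α)‖ < 1 := by exact_mod_cast pow_norm_lt hα Nat.prime_two
  have h1 := one_sub_ne hx
  rw [show (1 - α) = 1 + -α by ring, Complex.cpow_add _ _ two_ne_zero, Complex.cpow_one]
  have e : 2 - (1 - (2 : ℂ) ^ (-α))⁻¹ = (1 - 2 * (2 : ℂ) ^ (-α)) / (1 - (2 : ℂ) ^ (-α)) := by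
    field_simp; ring
  rw [e, div_eq_zero_iff]
  simp [h1]

theorem stmt12 (α : ℂ) (hα : 0 < α.re) :
    IsMO (fun n : ℕ => (-1 : ℂ) ^ (n - 1) / (n : ℂ) ^ α) ↔ riemannZeta α = 0 := by
  constructor
  · rintro ⟨-, hs, hp⟩
    obtain ⟨L, hL, hLt⟩ := hp 2 Nat.prime_two
    have hL' := tendsto_nhds_unique hLt (two_tendsto hα)
    rw [hL', Ne, two_ne_iff hα] at hL
    have h1 : α ≠ 1 := by rintro rfl; simp at hL
    have := tendsto_nhds_unique hs (eta_tendsto hα h1)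
    exact (mul_eq_zero.mp this.symm).resolve_left hL
  · intro hz
    have hre : α.re < 1 := by
      by_contra h
      exact riemannZeta_ne_zero_of_one_le_re (not_lt.mp h) hz
    have h1 : α ≠ 1 := by rintro rfl; simp at hre
    refine ⟨eta_mult hα, ?_, ?_⟩
    · have := eta_tendsto hα h1
      rw [hz, mul_zero] at this
      exact this
    · intro p hp
      by_cases h2 : p = 2
      · subst h2
        refine ⟨_, ?_, two_tendsto hα⟩
        rw [Ne, two_ne_iff hα]
        intro h
        have h3 : ‖(2 : ℂ) ^ (1 - α)‖ = 1 := by rw [← sub_eq_zero.mp h]; simp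
        have h4 := Complex.norm_natCast_cpow_of_pos (n := 2) (by norm_num) (1 - α)
        push_cast at h4
        rw [h3] at h4
        have h5 : (1 : ℝ) < 2 ^ (1 - α).re :=
          Real.one_lt_rpow (by norm_num) (by simpa using hre)
        linarith
      · exact ⟨_, inv_ne_zero (one_sub_ne (pow_norm_lt hα hp)), odd_tendsto hα hp h2⟩
end

section
/- Let α be a complex number with Re α > 0 and ζ(α) = 0, where ζ is the Riemann zeta function. Then the partial sums satisfy ∑_{n ≤ x} (−1)^{n−1}/n^α = O(x^{−Re α}), i.e., there is a constant C such that |∑_{n ≤ x} (−1)^{n−1}/n^α| ≤ C x^{−Re α} for all x ≥ 1. -/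
open Filter Finset

/-- The terms `(k+1)^(-s)`. -/
noncomputable def etaTerm (s : ℂ) (k : ℕ) : ℂ := ((k + 1 : ℕ) : ℂ) ^ (-s)

lemma etaTerm_diff_eq (s : ℂ) (hs : 0 < s.re) (k : ℕ) :
    etaTerm s k - etaTerm s (k + 1) =
      s * ∫ x in ((k + 1 : ℕ) : ℝ)..((k + 1 + 1 : ℕ) : ℝ), (x : ℂ) ^ (-s - 1) := by
  have hs0 : s ≠ 0 := by
    rintro rfl
    simp at hs
  have h0 : (0 : ℝ) ∉ Set.uIcc ((k + 1 : ℕ) : ℝ) ((k + 1 + 1 : ℕ) : ℝ) := by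
    rw [Set.uIcc_of_le (by push_cast; linarith)]
    intro h
    have := h.1
    push_cast at this
    have hk : (0 : ℝ) ≤ k := k.cast_nonneg
    linarith
  rw [integral_cpow (Or.inr ⟨by
    intro h
    apply hs0
    linear_combination -h, h0⟩)]
  simp only [etaTerm, sub_add_cancel, Complex.ofReal_natCast]
  field_simp
  ring

lemma etaTerm_diff_le (s : ℂ) (hs : 0 < s.re) (k : ℕ) :
    ‖etaTerm s k - etaTerm s (k + 1)‖ ≤ ‖s‖ / s.re *
      (((k + 1 : ℕ) : ℝ) ^ (-s.re) - ((k + 1 + 1 : ℕ) : ℝ) ^ (-s.re)) := by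
  have hk : (0 : ℝ) ≤ k := k.cast_nonneg
  have hle : ((k + 1 : ℕ) : ℝ) ≤ ((k + 1 + 1 : ℕ) : ℝ) := by push_cast; linarith
  have hpos : (0 : ℝ) < ((k + 1 : ℕ) : ℝ) := by positivity
  have h0 : (0 : ℝ) ∉ Set.uIcc ((k + 1 : ℕ) : ℝ) ((k + 1 + 1 : ℕ) : ℝ) := by
    rw [Set.uIcc_of_le hle]
    intro h
    linarith [h.1]
  have h1 : ‖∫ x in ((k + 1 : ℕ) : ℝ)..((k + 1 + 1 : ℕ) : ℝ), (x : ℂ) ^ (-s - 1)‖ ≤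
      ∫ x in ((k + 1 : ℕ) : ℝ)..((k + 1 + 1 : ℕ) : ℝ), x ^ (-s.re - 1) := by
    refine (intervalIntegral.norm_integral_le_integral_norm hle).trans (le_of_eq ?_)
    refine intervalIntegral.integral_congr fun x hx => ?_
    rw [Set.uIcc_of_le hle] at hx
    rw [Complex.norm_cpow_eq_rpow_re_of_pos (hpos.trans_le hx.1)]
    simp
  rw [integral_rpow (Or.inr ⟨by linarith, h0⟩)] at h1
  rw [etaTerm_diff_eq s hs, norm_mul]
  refine (mul_le_mul_of_nonneg_left h1 (norm_nonneg _)).trans (le_of_eq ?_)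
  simp only [sub_add_cancel]
  field_simp
  ring

lemma etaTerm_diff_le' (s : ℂ) (hs : 0 < s.re) (k : ℕ) :
    ‖etaTerm s k - etaTerm s (k + 1)‖ ≤ ‖s‖ * ((k + 1 : ℕ) : ℝ) ^ (-s.re - 1) := by
  have hk : (0 : ℝ) ≤ k := k.cast_nonneg
  have hle : ((k + 1 : ℕ) : ℝ) ≤ ((k + 1 + 1 : ℕ) : ℝ) := by push_cast; linarith
  have hpos : (0 : ℝ) < ((k + 1 : ℕ) : ℝ) := by positivity
  rw [etaTerm_diff_eq s hs, norm_mul]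
  refine mul_le_mul_of_nonneg_left ?_ (norm_nonneg _)
  have := intervalIntegral.norm_integral_le_of_norm_le_const
    (a := ((k + 1 : ℕ) : ℝ)) (b := ((k + 1 + 1 : ℕ) : ℝ))
    (f := fun x : ℝ => (x : ℂ) ^ (-s - 1)) (C := ((k + 1 : ℕ) : ℝ) ^ (-s.re - 1)) (by
      intro x hx
      rw [Set.uIoc_of_le hle] at hx
      rw [Complex.norm_cpow_eq_rpow_re_of_pos (hpos.trans hx.1)]
      simp only [Complex.sub_re, Complex.neg_re, Complex.one_re]
      exact Real.rpow_le_rpow_of_nonpos hpos hx.1.le (by linarith))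
  refine this.trans (le_of_eq ?_)
  have : ((k + 1 + 1 : ℕ) : ℝ) - ((k + 1 : ℕ) : ℝ) = 1 := by push_cast; ring
  rw [this]
  simp

/-- The alternating differences. -/
noncomputable def etaDiff (s : ℂ) (k : ℕ) : ℂ := (-1) ^ k * (etaTerm s k - etaTerm s (k + 1))

lemma norm_etaDiff (s : ℂ) (k : ℕ) : ‖etaDiff s k‖ = ‖etaTerm s k - etaTerm s (k + 1)‖ := by
  simp [etaDiff]

lemma summable_shift_rpow {c : ℝ} (hc : 0 < c) (R : ℝ) :
    Summable fun k : ℕ => R * ((k + 1 : ℕ) : ℝ) ^ (-c - 1) := by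
  refine Summable.mul_left _ ?_
  exact (summable_nat_add_iff 1).2 (Real.summable_nat_rpow.2 (by linarith))

lemma summable_etaDiff (s : ℂ) (hs : 0 < s.re) : Summable (etaDiff s) := by
  refine Summable.of_norm_bounded (summable_shift_rpow hs ‖s‖) fun k => ?_
  rw [norm_etaDiff]
  exact etaTerm_diff_le' s hs k

lemma differentiable_etaDiff (k : ℕ) : Differentiable ℂ fun s => etaDiff s k := by
  have h : ∀ n : ℕ, Differentiable ℂ fun s : ℂ => etaTerm s n := by
    intro n s
    have : ((n + 1 : ℕ) : ℂ) ≠ 0 := Nat.cast_ne_zero.2 n.succ_ne_zero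
    exact (differentiableAt_id.neg).const_cpow (Or.inl this)
  exact ((h k).sub (h (k + 1))).const_mul _

lemma differentiableAt_tsum_etaDiff (s : ℂ) (hs : 0 < s.re) :
    DifferentiableAt ℂ (fun s => ∑' k, etaDiff s k) s := by
  let U : Set ℂ := {z | s.re / 2 < z.re} ∩ {z | ‖z‖ < ‖s‖ + 1}
  have hU : IsOpen U := (isOpen_lt continuous_const Complex.continuous_re).inter
    (isOpen_lt continuous_norm continuous_const)
  have hsU : s ∈ U := ⟨by simp only [Set.mem_ofPred_eq]; linarith, by simp⟩
  have hd : DifferentiableOn ℂ (fun s => ∑' k, etaDiff s k) U := by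
    refine Complex.differentiableOn_tsum_of_summable_norm
      (summable_shift_rpow (half_pos hs) (‖s‖ + 1))
      (fun k => (differentiable_etaDiff k).differentiableOn) hU ?_
    rintro k z ⟨hz1, hz2⟩
    simp only [Set.mem_ofPred_eq] at hz1 hz2
    rw [norm_etaDiff]
    refine (etaTerm_diff_le' z (by linarith) k).trans ?_
    refine mul_le_mul hz2.le ?_ (by positivity) (by positivity)
    refine Real.rpow_le_rpow_of_exponent_le ?_ (by linarith)
    push_cast
    linarith [(k.cast_nonneg : (0 : ℝ) ≤ k)]
  exact hd.differentiableAt (hU.mem_nhds hsU)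

lemma tsum_etaDiff_of_one_lt (s : ℂ) (hs : 1 < s.re) :
    1 + ∑' k, etaDiff s k = 2 * (1 - 2 * 2 ^ (-s)) * riemannZeta s := by
  have hS : Summable (etaTerm s) := by
    have := (summable_nat_add_iff 1).2 (Complex.summable_one_div_nat_cpow.2 hs)
    refine this.congr fun k => ?_
    simp [etaTerm, Complex.cpow_neg]
  have hz : HasSum (etaTerm s) (riemannZeta s) := by
    rw [zeta_eq_tsum_one_div_nat_add_one_cpow hs]
    convert hS.hasSum using 2
    ext k
    simp [etaTerm, Complex.cpow_neg]
  have hB : HasSum (fun k => etaTerm s (2 * k + 1)) (2 ^ (-s) * riemannZeta s) := by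
    refine (hz.mul_left _).congr_fun ?_
    intro k
    have h := Complex.natCast_mul_natCast_cpow 2 (k + 1) (-s)
    have h2 : 2 * k + 1 + 1 = 2 * (k + 1) := by ring
    simp only [etaTerm]
    rw [h2, Nat.cast_mul, h]
    simp
  have hA : HasSum (fun k => etaTerm s (2 * k)) (riemannZeta s - 2 ^ (-s) * riemannZeta s) := by
    have h1 : Summable fun k => etaTerm s (2 * k) :=
      hS.comp_injective (mul_right_injective₀ (two_ne_zero))
    have h2 := (h1.hasSum.even_add_odd hB).unique hz
    have h3 := h1.hasSum
    rwa [eq_sub_of_add_eq h2] at h3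
  have hE : HasSum (fun k => (-1) ^ k * etaTerm s k)
      ((riemannZeta s - 2 ^ (-s) * riemannZeta s) + -(2 ^ (-s) * riemannZeta s)) := by
    refine HasSum.even_add_odd ?_ ?_
    · simpa using hA
    · simpa [pow_succ] using hB.neg
  have hE1 := (hasSum_nat_add_iff' 1).2 hE
  have hF := hE.add hE1
  have : HasSum (etaDiff s) _ := hF.congr_fun fun k => by
    simp only [etaDiff, pow_succ]
    ring
  rw [this.tsum_eq]
  simp [etaTerm]
  ring

lemma tsum_etaDiff_eq (s : ℂ) (hs : 0 < s.re) (h1 : s ≠ 1) :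
    1 + ∑' k, etaDiff s k = 2 * (1 - 2 * 2 ^ (-s)) * riemannZeta s := by
  let U : Set ℂ := {z | 0 < z.re}
  have hU : IsOpen U := isOpen_lt continuous_const Complex.continuous_re
  have hUc : IsPreconnected U := (convex_halfSpace_re_gt 0).isPreconnected
  have hf : AnalyticOnNhd ℂ (fun z => (z - 1) * (1 + ∑' k, etaDiff z k)) U := by
    refine DifferentiableOn.analyticOnNhd (fun z hz => ?_) hU
    have := differentiableAt_tsum_etaDiff z hz
    exact DifferentiableAt.differentiableWithinAt (by fun_prop)
  have hg : AnalyticOnNhd ℂ (fun z => 2 * (1 - 2 * 2 ^ (-z)) * riemannZeta₁ z) U := by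
    refine DifferentiableOn.analyticOnNhd (fun z hz => ?_) hU
    have h2 : DifferentiableAt ℂ (fun z : ℂ => (2 : ℂ) ^ (-z)) z :=
      (differentiableAt_id.neg).const_cpow (Or.inl two_ne_zero)
    have h3 := differentiable_riemannZeta₁ z
    exact DifferentiableAt.differentiableWithinAt (by fun_prop)
  have key := hf.eqOn_of_preconnected_of_eventuallyEq hg hUc (z₀ := 2) (by simp [U]) (by
    have hV : {z : ℂ | 1 < z.re} ∈ nhds (2 : ℂ) :=
      (isOpen_lt continuous_const Complex.continuous_re).mem_nhds (by simp)
    filter_upwards [hV] with z hz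
    have hz1 : z ≠ 1 := by
      rintro rfl
      simp at hz
    have hz2 : z - 1 ≠ 0 := sub_ne_zero.2 hz1
    rw [tsum_etaDiff_of_one_lt z hz, riemannZeta_eq_inv_sub_mul hz1]
    field_simp)
  have h2 : s - 1 ≠ 0 := sub_ne_zero.2 h1
  have := key hs
  simp only at this
  rw [riemannZeta_eq_inv_sub_mul h1]
  field_simp
  linear_combination this

lemma two_mul_sum_etaTerm (s : ℂ) (N : ℕ) :
    2 * ∑ k ∈ Finset.range (N + 1), (-1) ^ k * etaTerm s k =
      1 + ∑ k ∈ Finset.range N, etaDiff s k + (-1) ^ N * etaTerm s N := by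
  induction N with
  | zero => simp [etaTerm]; norm_num
  | succ N ih =>
    rw [Finset.sum_range_succ, mul_add, ih, Finset.sum_range_succ, etaDiff, pow_succ]
    ring

lemma norm_tail_le (s : ℂ) (hs : 0 < s.re) (N : ℕ) :
    ‖∑' k, etaDiff s (k + N)‖ ≤ ‖s‖ / s.re * ((N + 1 : ℕ) : ℝ) ^ (-s.re) := by
  have hsum : Summable fun k => etaDiff s (k + N) :=
    (summable_nat_add_iff N).2 (summable_etaDiff s hs)
  refine le_of_tendsto hsum.hasSum.tendsto_sum_nat.norm (Filter.Eventually.of_forall fun M => ?_)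
  have : ‖∑ k ∈ Finset.range M, etaDiff s (k + N)‖ ≤ ‖s‖ / s.re *
      (((N + 1 : ℕ) : ℝ) ^ (-s.re) - ((M + N + 1 : ℕ) : ℝ) ^ (-s.re)) := by
    induction M with
    | zero => simp
    | succ M ih =>
      rw [Finset.sum_range_succ]
      refine (norm_add_le _ _).trans ?_
      have h2 := etaTerm_diff_le s hs (M + N)
      rw [← norm_etaDiff] at h2
      refine (add_le_add ih h2).trans (le_of_eq ?_)
      rw [show M + 1 + N + 1 = M + N + 1 + 1 by ring]
      ring
  refine this.trans (mul_le_mul_of_nonneg_left ?_ (by positivity))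
  have : (0 : ℝ) ≤ ((M + N + 1 : ℕ) : ℝ) ^ (-s.re) := by positivity
  linarith

theorem stmt13 (α : ℂ) (hα : 0 < α.re) (hζ : riemannZeta α = 0) :
    ∃ C : ℝ, ∀ x : ℝ, 1 ≤ x →
      ‖∑ n ∈ Finset.Icc 1 ⌊x⌋₊, (-1 : ℂ) ^ (n - 1) / (n : ℂ) ^ α‖ ≤ C * x ^ (-α.re) := by
  have h1 : α ≠ 1 := by
    rintro rfl
    exact riemannZeta_one_ne_zero hζ
  have hF := tsum_etaDiff_eq α hα h1
  rw [hζ, mul_zero] at hF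
  refine ⟨(‖α‖ / α.re + 1) / 2 * 2 ^ α.re, fun x hx => ?_⟩
  obtain ⟨N, hN⟩ : ∃ N, ⌊x⌋₊ = N + 1 :=
    Nat.exists_eq_succ_of_ne_zero (Nat.floor_pos.2 hx).ne'
  have hsum : ∑ n ∈ Finset.Icc 1 ⌊x⌋₊, (-1 : ℂ) ^ (n - 1) / (n : ℂ) ^ α =
      ∑ k ∈ Finset.range (N + 1), (-1) ^ k * etaTerm α k := by
    rw [hN, ← Finset.Ico_add_one_right_eq_Icc, Finset.sum_Ico_eq_sum_range]
    refine Finset.sum_congr (by simp) fun k _ => ?_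
    simp [etaTerm, Complex.cpow_neg, div_eq_mul_inv, add_comm]
  have hsplit := (summable_etaDiff α hα).sum_add_tsum_nat_add N
  have h2 : ∑ k ∈ Finset.range (N + 1), (-1) ^ k * etaTerm α k =
      (-∑' k, etaDiff α (k + N) + (-1) ^ N * etaTerm α N) / 2 := by
    linear_combination (two_mul_sum_etaTerm α N + hsplit + hF) / 2
  have hnt : ‖(-1) ^ N * etaTerm α N‖ = ((N + 1 : ℕ) : ℝ) ^ (-α.re) := by
    rw [norm_mul, etaTerm, Complex.norm_natCast_cpow_of_pos N.succ_pos]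
    simp
  have hb : ((N + 1 : ℕ) : ℝ) ^ (-α.re) ≤ 2 ^ α.re * x ^ (-α.re) := by
    have hx2 : x / 2 ≤ ((N + 1 : ℕ) : ℝ) := by
      have h3 := Nat.lt_floor_add_one x
      rw [hN] at h3
      push_cast at h3 ⊢
      have : (0 : ℝ) ≤ N := N.cast_nonneg
      linarith
    refine (Real.rpow_le_rpow_of_nonpos (by linarith) hx2 (by linarith)).trans (le_of_eq ?_)
    rw [Real.div_rpow (by linarith) (by norm_num), Real.rpow_neg (by norm_num : (0 : ℝ) ≤ 2)]
    field_simp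
  rw [hsum, h2, norm_div, Complex.norm_ofNat]
  have h4 := norm_add_le (-∑' k, etaDiff α (k + N)) ((-1) ^ N * etaTerm α N)
  rw [norm_neg, hnt] at h4
  have h5 := norm_tail_le α hα N
  calc _ ≤ ((‖α‖ / α.re + 1) / 2) * ((N + 1 : ℕ) : ℝ) ^ (-α.re) := by linarith
    _ ≤ ((‖α‖ / α.re + 1) / 2) * (2 ^ α.re * x ^ (-α.re)) :=
      mul_le_mul_of_nonneg_left hb (by positivity)
    _ = _ := by ring
end

section
/- Let α be a complex number with Re α > 0 and ζ(α) = 0, where ζ is the Riemann zeta function. Then ∑_{n ≤ x} (−1)^{n−1}/n^α = Ω(x^{−Re α}); that is, there exists a constant c > 0 and arbitrarily large x with |∑_{n ≤ x} (−1)^{n−1}/n^α| ≥ c x^{−Re α}. -/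
open Filter Finset

theorem stmt14 (α : ℂ) (hα : 0 < α.re) (hζ : riemannZeta α = 0) :
    ∃ c : ℝ, 0 < c ∧ ∀ x₀ : ℝ, ∃ x : ℝ, x₀ ≤ x ∧
      c * x ^ (-α.re) ≤ ‖∑ n ∈ Finset.Icc 1 ⌊x⌋₊, (-1 : ℂ) ^ (n - 1) / (n : ℂ) ^ α‖ := by
  refine ⟨(2 : ℝ) ^ (-α.re) / 2, by positivity, fun x₀ => ?_⟩
  by_contra hcon
  push Not at hcon
  set n : ℕ := ⌈x₀⌉₊ + 1 with hn
  have hx : x₀ ≤ (n : ℝ) := by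
    have := Nat.le_ceil x₀
    rw [hn]; push_cast; linarith
  have hn1 : (1 : ℝ) ≤ n := by rw [hn]; push_cast; linarith [Nat.cast_nonneg (α := ℝ) ⌈x₀⌉₊]
  have h1 := hcon n hx
  have h2 := hcon ((n + 1 : ℕ) : ℝ) (by push_cast; linarith)
  rw [Nat.floor_natCast] at h1 h2
  rw [Finset.sum_Icc_succ_top (by omega)] at h2
  set S := ∑ k ∈ Finset.Icc 1 n, (-1 : ℂ) ^ (k - 1) / (k : ℂ) ^ α
  set t := (-1 : ℂ) ^ (n + 1 - 1) / ((n + 1 : ℕ) : ℂ) ^ α with ht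
  have hnorm : ‖t‖ = ((n + 1 : ℕ) : ℝ) ^ (-α.re) := by
    rw [ht, norm_div, norm_pow, norm_neg, norm_one, one_pow,
      Complex.norm_natCast_cpow_of_pos (by omega), Real.rpow_neg (by positivity), one_div]
  have htri : ‖t‖ ≤ ‖S + t‖ + ‖S‖ := by
    have := norm_sub_le (S + t) S
    simpa using this
  have hA : (2 : ℝ) ^ (-α.re) * (n : ℝ) ^ (-α.re) ≤ ((n + 1 : ℕ) : ℝ) ^ (-α.re) := by
    rw [← Real.mul_rpow (by norm_num) (by positivity)]
    apply Real.rpow_le_rpow_of_nonpos (by positivity)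
    · push_cast; linarith
    · linarith
  have hB : (2 : ℝ) ^ (-α.re) * ((n + 1 : ℕ) : ℝ) ^ (-α.re) ≤ ((n + 1 : ℕ) : ℝ) ^ (-α.re) := by
    apply mul_le_of_le_one_left (by positivity)
    exact Real.rpow_le_one_of_one_le_of_nonpos (by norm_num) (by linarith)
  linarith
end

section
/- For an integer k > 1, define g_k : ℕ → ℂ by g_k(n) = 1 − k if k divides n and g_k(n) = 1 otherwise. Then g_k is a multiplicative function if and only if k is a prime power. -/
open Filter Finset

/-- For `k > 1`, `gk k n = 1 - k` if `k ∣ n` and `1` otherwise. -/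
noncomputable def gk (k : ℕ) (n : ℕ) : ℂ := if k ∣ n then 1 - (k : ℂ) else 1

theorem stmt15 (k : ℕ) (hk : 1 < k) : IsMultFn (gk k) ↔ IsPrimePow k := by
  constructor
  · rintro ⟨-, h⟩
    have hp : (k.minFac).Prime := Nat.minFac_prime (by omega)
    have hk0 : k ≠ 0 := by omega
    have hmul := Nat.ordProj_mul_ordCompl_eq_self k k.minFac
    have hcop : Nat.Coprime (k.minFac ^ k.factorization k.minFac)
        (k / k.minFac ^ k.factorization k.minFac) :=
      Nat.Coprime.pow_left _ (Nat.coprime_ordCompl hp hk0)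
    have he : k.factorization k.minFac ≠ 0 :=
      (hp.factorization_pos_of_dvd hk0 (Nat.minFac_dvd k)).ne'
    have ha : 1 < k.minFac ^ k.factorization k.minFac := Nat.one_lt_pow he hp.one_lt
    generalize hA : k.minFac ^ k.factorization k.minFac = a at *
    generalize k / a = b at *
    by_cases hb : b = 1
    · rw [hb, mul_one] at hmul
      rw [← hmul, ← hA]
      exact hp.isPrimePow.pow he
    · exfalso
      have hb0 : b ≠ 0 := by
        rintro rfl
        simp at hmul
        omega
      have h1 : ¬ k ∣ a := fun hd => by
        have := Nat.le_of_dvd (by omega) hd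
        have : 2 ≤ b := by omega
        nlinarith
      have h2 : ¬ k ∣ b := fun hd => by
        have := Nat.le_of_dvd (by omega) hd
        have : 1 ≤ b := by omega
        nlinarith
      have h3 := h a b hcop
      rw [hmul] at h3
      simp [gk, h1, h2] at h3
      omega
  · intro h
    refine ⟨?_, fun m n hmn => ?_⟩
    · have : ¬ k ∣ 1 := by
        rw [Nat.dvd_one]
        omega
      simp [gk, this]
    · have h1 := hmn.isPrimePow_dvd_mul h
      have h2 : ¬ (k ∣ m ∧ k ∣ n) := fun ⟨h3, h4⟩ => by
        have := Nat.eq_one_of_dvd_coprimes hmn h3 h4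
        omega
      by_cases hm : k ∣ m <;> by_cases hn : k ∣ n <;> simp_all [gk]
end

section
/- Let k > 1 be an integer and let α be a complex number with Re α > 0 and α ≠ 1. Then the series ∑_{n=1}^∞ g_k(n)/n^α converges and its sum equals (1 − k^{1−α}) ζ(α), where ζ is the Riemann zeta function. -/
open Filter Finset

/-- Partial sums of `gk`. -/
noncomputable def gkS (k N : ℕ) : ℂ := ∑ i ∈ range N, gk k (i + 1)

lemma gkS_eq (k N : ℕ) : gkS k N = (N : ℂ) - k * ((N / k : ℕ) : ℂ) := by
  induction N with
  | zero => simp [gkS]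
  | succ n ih =>
    have h : gkS k (n + 1) = gkS k n + gk k (n + 1) := by simp [gkS, sum_range_succ]
    rw [h, ih, Nat.succ_div, gk]
    split_ifs <;> push_cast <;> ring

lemma gkS_norm (k N : ℕ) (hk : 1 < k) : ‖gkS k N‖ ≤ k := by
  have h : gkS k N = ((N % k : ℕ) : ℂ) := by
    rw [gkS_eq]
    have := congrArg (fun n : ℕ => (n : ℂ)) (Nat.mod_add_div N k)
    push_cast at this
    linear_combination -this
  rw [h, Complex.norm_natCast]
  exact_mod_cast (Nat.mod_lt _ (by omega)).le

lemma parts (a u : ℕ → ℂ) (S : ℕ → ℂ) (h0 : S 0 = 0) (hS : ∀ n, S (n + 1) = S n + a n) (N : ℕ) :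
    ∑ i ∈ range N, a i * u i = S N * u N + ∑ i ∈ range N, S (i + 1) * (u i - u (i + 1)) := by
  induction N with
  | zero => simp [h0]
  | succ n ih => rw [sum_range_succ, sum_range_succ, ih, hS]; ring

lemma diff_bound (s : ℂ) (hs : 0 < s.re) (n : ℕ) :
    ‖((n : ℂ) + 1) ^ (-s) - (((n + 1 : ℕ) : ℂ) + 1) ^ (-s)‖
      ≤ ‖s‖ * ((n : ℝ) + 1) ^ (-s.re - 1) := by
  have hs0 : -s ≠ 0 := by
    intro h
    have : s = 0 := by simpa using h
    simp [this] at hs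
  have hn : (0 : ℝ) < (n : ℝ) + 1 := by positivity
  have key := norm_image_sub_le_of_norm_deriv_le_segment' (f := fun y : ℝ => (y : ℂ) ^ (-s))
    (f' := fun x => -s * (x : ℂ) ^ (-s - 1)) (a := (n : ℝ) + 1) (b := (n : ℝ) + 1 + 1)
    (C := ‖s‖ * ((n : ℝ) + 1) ^ (-s.re - 1)) ?_ ?_ ((n : ℝ) + 1 + 1) ⟨by linarith, le_rfl⟩
  · rw [norm_sub_rev]
    simpa using key
  · intro x hx
    exact (hasDerivAt_ofReal_cpow_const (by linarith [hx.1]) hs0).hasDerivWithinAt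
  · intro x hx
    have hx0 : 0 < x := by linarith [hx.1]
    rw [norm_mul, norm_neg, Complex.norm_cpow_eq_rpow_re_of_pos hx0]
    simp only [Complex.sub_re, Complex.neg_re, Complex.one_re]
    gcongr ?_ * ?_
    exact Real.rpow_le_rpow_of_nonpos hn hx.1 (by linarith)

/-- The general term after summation by parts. -/
noncomputable def gkT (k n : ℕ) (s : ℂ) : ℂ :=
  gkS k (n + 1) * (((n : ℂ) + 1) ^ (-s) - (((n + 1 : ℕ) : ℂ) + 1) ^ (-s))

lemma gkT_bound (k n : ℕ) (hk : 1 < k) (s : ℂ) (σ R : ℝ) (hσ : 0 < σ) (hs : σ < s.re)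
    (hR : ‖s‖ < R) : ‖gkT k n s‖ ≤ k * (R * ((n : ℝ) + 1) ^ (-σ - 1)) := by
  rw [gkT, norm_mul]
  refine mul_le_mul (gkS_norm _ _ hk) ((diff_bound s (by linarith) n).trans ?_) (norm_nonneg _)
    (by positivity)
  have : (1 : ℝ) ≤ (n : ℝ) + 1 := by linarith [Nat.cast_nonneg (α := ℝ) n]
  have hR0 : 0 ≤ R := (norm_nonneg s).trans hR.le
  gcongr

lemma bound_summable (k : ℕ) (σ R : ℝ) (hσ : 0 < σ) :
    Summable fun n : ℕ => (k : ℝ) * (R * ((n : ℝ) + 1) ^ (-σ - 1)) := by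
  refine Summable.mul_left _ (Summable.mul_left _ ?_)
  have := (summable_nat_add_iff 1).2 (Real.summable_nat_rpow (p := -σ - 1) |>.2 (by linarith))
  simpa using this

lemma gkT_summable (k : ℕ) (hk : 1 < k) (s : ℂ) (hs : 0 < s.re) :
    Summable fun n => gkT k n s :=
  Summable.of_norm_bounded (bound_summable k (s.re / 2) (‖s‖ + 1) (by linarith))
    fun n => gkT_bound k n hk s _ _ (by linarith) (by linarith) (by linarith)

/-- The analytic continuation given by summation by parts. -/
noncomputable def gkG (k : ℕ) (s : ℂ) : ℂ := ∑' n, gkT k n s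

lemma gkT_diff (k n : ℕ) : Differentiable ℂ (gkT k n) := by
  unfold gkT
  have h (m : ℕ) : Differentiable ℂ fun s : ℂ => ((m : ℂ) + 1) ^ (-s) := by
    have : (m : ℂ) + 1 ≠ 0 := by exact_mod_cast Nat.succ_ne_zero m
    intro s
    exact (differentiableAt_id.neg).const_cpow (Or.inl this)
  exact ((h n).sub (h (n + 1))).const_mul _

lemma gkG_diff (k : ℕ) (hk : 1 < k) : DifferentiableOn ℂ (gkG k) {s | 0 < s.re} := by
  intro s hs
  have hs : 0 < s.re := hs
  have hU : IsOpen ({w : ℂ | s.re / 2 < w.re} ∩ {w | ‖w‖ < ‖s‖ + 1}) :=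
    (isOpen_lt continuous_const Complex.continuous_re).inter
      (isOpen_lt continuous_norm continuous_const)
  have := Complex.differentiableOn_tsum_of_summable_norm
    (bound_summable k (s.re / 2) (‖s‖ + 1) (by linarith))
    (fun n => (gkT_diff k n).differentiableOn) hU
    (fun n w hw => gkT_bound k n hk w _ _ (by linarith) hw.1 hw.2)
  exact (this.differentiableAt (hU.mem_nhds ⟨by simpa using hs, by simp⟩)).differentiableWithinAt

lemma gk_tendsto (k : ℕ) (hk : 1 < k) (s : ℂ) (hs : 0 < s.re) :
    SeriesTendsTo (fun n => gk k (n + 1) / ((n : ℂ) + 1) ^ s) (gkG k s) := by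
  unfold SeriesTendsTo
  have h (N : ℕ) : ∑ n ∈ range N, gk k (n + 1) / ((n : ℂ) + 1) ^ s =
      gkS k N * ((N : ℂ) + 1) ^ (-s) + ∑ n ∈ range N, gkT k n s := by
    unfold gkT
    rw [← parts (fun n => gk k (n + 1)) (fun n => ((n : ℂ) + 1) ^ (-s)) (gkS k) (by simp [gkS])
      (fun n => by simp [gkS, sum_range_succ])]
    refine sum_congr rfl fun n _ => ?_
    rw [Complex.cpow_neg, div_eq_mul_inv]
  simp only [h]
  rw [← zero_add (gkG k s)]
  refine Tendsto.add ?_ (gkT_summable k hk s hs).hasSum.tendsto_sum_nat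
  refine squeeze_zero_norm (a := fun N : ℕ => (k : ℝ) * ((N : ℝ) + 1) ^ (-s.re)) (fun N => ?_) ?_
  · rw [norm_mul]
    have h2 : ‖((N : ℂ) + 1) ^ (-s)‖ = ((N : ℝ) + 1) ^ (-s.re) := by
      have := Complex.norm_cpow_eq_rpow_re_of_pos (x := (N : ℝ) + 1) (by positivity) (-s)
      simpa using this
    rw [h2]
    gcongr
    exact gkS_norm _ _ hk
  · rw [← mul_zero (k : ℝ)]
    exact ((tendsto_rpow_neg_atTop hs).comp
      (tendsto_atTop_add_const_right _ 1 tendsto_natCast_atTop_atTop)).const_mul _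

lemma gkG_eq (k : ℕ) (hk : 1 < k) (s : ℂ) (hs : 1 < s.re) :
    gkG k s = (1 - (k : ℂ) ^ (1 - s)) * riemannZeta s := by
  have hs0 : s ≠ 0 := by rintro rfl; simp at hs; linarith
  have hk0 : (k : ℂ) ≠ 0 := by exact_mod_cast (by omega : k ≠ 0)
  have hz : HasSum (fun n : ℕ => 1 / (n : ℂ) ^ s) (riemannZeta s) := by
    rw [zeta_eq_tsum_one_div_nat_cpow hs]
    exact (Complex.summable_one_div_nat_cpow.2 hs).hasSum
  have hk1 : HasSum (fun n : ℕ => if k ∣ n then (k : ℂ) / (n : ℂ) ^ s else 0)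
      ((k : ℂ) ^ (1 - s) * riemannZeta s) := by
    have hinj : Function.Injective (fun n : ℕ => k * n) :=
      fun a b h => Nat.eq_of_mul_eq_mul_left (by omega) h
    rw [← hinj.hasSum_iff]
    · have he := hz.mul_left ((k : ℂ) ^ (1 - s))
      refine cast (congrArg (fun f => HasSum f _) (funext ?_)) he
      intro n
      symm
      simp only [Function.comp, dvd_mul_right, if_true, Nat.cast_mul]
      rw [Complex.natCast_mul_natCast_cpow, Complex.cpow_sub _ _ hk0, Complex.cpow_one]
      field_simp
    · intro x hx
      rw [if_neg]
      rintro ⟨c, rfl⟩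
      exact hx ⟨c, rfl⟩
  have hsum : HasSum (fun n : ℕ => gk k n / (n : ℂ) ^ s)
      ((1 - (k : ℂ) ^ (1 - s)) * riemannZeta s) := by
    have he := hz.sub hk1
    rw [show riemannZeta s - (k : ℂ) ^ (1 - s) * riemannZeta s =
      (1 - (k : ℂ) ^ (1 - s)) * riemannZeta s by ring] at he
    refine cast (congrArg (fun f => HasSum f _) (funext ?_)) he
    intro n
    symm
    unfold gk
    split_ifs <;> ring
  have h2 := (hasSum_nat_add_iff' 1).2 hsum
  simp only [range_one, sum_singleton, Nat.cast_zero, Complex.zero_cpow hs0, div_zero, sub_zero,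
    Nat.cast_add, Nat.cast_one] at h2
  exact tendsto_nhds_unique (gk_tendsto k hk s (by linarith)) h2.tendsto_sum_nat

theorem stmt16 (k : ℕ) (hk : 1 < k) (α : ℂ) (hα : 0 < α.re) (hα1 : α ≠ 1) :
    SeriesTendsTo (fun n => gk k (n + 1) / ((n : ℂ) + 1) ^ α)
      ((1 - (k : ℂ) ^ (1 - α)) * riemannZeta α) := by
  have hk0 : (k : ℂ) ≠ 0 := by exact_mod_cast (by omega : k ≠ 0)
  have hopen (r : ℝ) : IsOpen {s : ℂ | r < s.re} := isOpen_lt continuous_const Complex.continuous_re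
  have hf : DifferentiableOn ℂ (fun s => (s - 1) * gkG k s) {s | 0 < s.re} :=
    (by fun_prop : DifferentiableOn ℂ (fun s : ℂ => s - 1) _).mul (gkG_diff k hk)
  have hg : DifferentiableOn ℂ (fun s => (1 - (k : ℂ) ^ (1 - s)) * riemannZeta₁ s)
      {s | 0 < s.re} := by
    refine DifferentiableOn.mul (fun s _ => ?_) differentiable_riemannZeta₁.differentiableOn
    exact (((differentiableAt_id.const_sub 1).const_cpow (Or.inl hk0)).const_sub
      1).differentiableWithinAt
  have heq : Set.EqOn (fun s => (s - 1) * gkG k s)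
      (fun s => (1 - (k : ℂ) ^ (1 - s)) * riemannZeta₁ s) {s | 0 < s.re} := by
    refine (hf.analyticOnNhd (hopen 0)).eqOn_of_preconnected_of_eventuallyEq
      (hg.analyticOnNhd (hopen 0)) (convex_halfSpace_re_gt 0).isPreconnected (z₀ := 2)
      (by simp) ?_
    filter_upwards [(hopen 1).mem_nhds (by simp : (2 : ℂ) ∈ {s : ℂ | 1 < s.re})] with s hs
    have hs : 1 < s.re := hs
    have hs1 : s ≠ 1 := by rintro rfl; simp at hs
    have : s - 1 ≠ 0 := sub_ne_zero.2 hs1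
    rw [gkG_eq k hk s hs, riemannZeta_eq_inv_sub_mul hs1]
    field_simp
  have h1 := heq hα
  have h0 : α - 1 ≠ 0 := sub_ne_zero.2 hα1
  have : gkG k α = (1 - (k : ℂ) ^ (1 - α)) * riemannZeta α := by
    rw [riemannZeta_eq_inv_sub_mul hα1]
    simp only at h1
    field_simp
    linear_combination h1
  rw [← this]
  exact gk_tendsto k hk α hα
end
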